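/- arXiv:0903.4508 — 3 statements merged into one kernel-verified Lean document; each statement's English description precedes it below -/
import Mathlib

section
/- Weak convergence theorem, Case (B): with s = −1, X_t/t converges weakly to the measure ((κ−2)/(κ−1))·δ_0 + (1/(κ−1))·f_κ(x)dx; that is, for every bounded continuous function g : ℝ → ℝ, lim_{t→∞} Σ_{x∈ℤ₊} P(X_t = x)·g(x/t) = ((κ−2)/(κ−1))·g(0) + (1/(κ−1))·∫_0^a g(x)·f_κ(x) dx. -/
open Filter Topology MeasureTheory

noncomputable section

/-- Half-line quantum walk `Ψ_t(x) = (Ψ_t^L(x), Ψ_t^R(x))` with a reflecting wall at the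
origin, coin parameters `a`, `b` and wall sign `s`:
`Ψ_0(0) = (1,0)`, `Ψ_0(x) = (0,0)` for `x ≥ 1`, and
`Ψ_{t+1}^L(x) = a·Ψ_t^L(x+1) − b·Ψ_t^R(x+1)`,
`Ψ_{t+1}^R(x) = b·Ψ_t^L(x−1) + a·Ψ_t^R(x−1)` for `x ≥ 2`,
`Ψ_{t+1}^R(1) = s·Ψ_t^L(0)`, `Ψ_{t+1}^R(0) = 0`. -/
noncomputable def psi (a b s : ℝ) : ℕ → ℕ → ℂ × ℂ
  | 0, x => if x = 0 then (1, 0) else (0, 0)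
  | t + 1, x =>
      ((a : ℂ) * (psi a b s t (x + 1)).1 - (b : ℂ) * (psi a b s t (x + 1)).2,
       if x = 0 then 0
       else if x = 1 then (s : ℂ) * (psi a b s t 0).1
       else (b : ℂ) * (psi a b s t (x - 1)).1 + (a : ℂ) * (psi a b s t (x - 1)).2)

/-- Position distribution `P(X_t = x) = |Ψ_t^L(x)|² + |Ψ_t^R(x)|²`. -/
noncomputable def prob (a b s : ℝ) (t x : ℕ) : ℝ :=
  ‖(psi a b s t x).1‖ ^ 2 + ‖(psi a b s t x).2‖ ^ 2


/-- initial profile of the image state -/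
noncomputable def mm (r : ℝ) (x : ℤ) : ℝ :=
  if x = 0 then (r ^ 2)⁻¹ else if 0 < x ∧ Even x then -((1 - (r ^ 2)⁻¹) * (r⁻¹) ^ x.toNat) else 0

/-- free walk on the whole line started from the image state -/
noncomputable def wphi (a b r : ℝ) : ℕ → ℤ → ℝ × ℝ
  | 0, x => (mm r x, -r * mm r x)
  | t + 1, x =>
      (a * (wphi a b r t (x + 1)).1 - b * (wphi a b r t (x + 1)).2,
       b * (wphi a b r t (x - 1)).1 + a * (wphi a b r t (x - 1)).2)

/-- localized part -/
noncomputable def wloc (r : ℝ) (t x : ℕ) : ℝ :=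
  if Even (t + x) then (1 - (r ^ 2)⁻¹) * (r⁻¹) ^ x else 0

structure Par (a b r : ℝ) : Prop where
  hr : 1 < r
  ha : a = 2 * r / (1 + r ^ 2)
  hb : b = (r ^ 2 - 1) / (1 + r ^ 2)

namespace Par
variable {a b r : ℝ}

lemma sq (h : Par a b r) : a ^ 2 + b ^ 2 = 1 := by
  have : (1 + r ^ 2) ≠ 0 := by positivity
  rw [h.ha, h.hb]; field_simp; ring

lemma e1 (h : Par a b r) : a + b * r = r := by
  have : (1 + r ^ 2) ≠ 0 := by positivity
  rw [h.ha, h.hb]; field_simp; ring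

lemma e2 (h : Par a b r) : b - a * r = -1 := by
  have : (1 + r ^ 2) ≠ 0 := by positivity
  rw [h.ha, h.hb]; field_simp; ring

lemma bpos (h : Par a b r) : 0 < b := by
  have := h.hr
  rw [h.hb]; apply div_pos <;> nlinarith

lemma apos (h : Par a b r) : 0 < a := by
  have := h.hr
  rw [h.ha]; positivity

end Par

lemma mm_nat (r : ℝ) (x : ℕ) (hr : 1 < r) :
    mm r x + wloc r 0 x = if x = 0 then 1 else 0 := by
  unfold mm wloc
  rcases Nat.eq_zero_or_pos x with h | h
  · subst h; simp
  · have h1 : ¬ ((x : ℤ) = 0) := by omega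
    have h2 : (0 : ℤ) < x := by omega
    simp only [h1, if_false, h2, true_and, zero_add, Int.even_coe_nat, Int.toNat_natCast, h.ne']
    split_ifs <;> ring

lemma mm_neg (r : ℝ) (x : ℤ) (hx : x < 0) : mm r x = 0 := by
  unfold mm
  rw [if_neg (by omega), if_neg (by omega)]

lemma mm_rec (r : ℝ) (hr : 1 < r) (x : ℤ) :
    r ^ 2 * mm r (x + 1) - mm r (x - 1) =
      (if x = -1 then 1 else 0) - (if x = 1 then 1 else 0) := by
  have hr0 : r ≠ 0 := by positivity
  rcases lt_trichotomy x 0 with h | h | h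
  · rw [mm_neg r (x - 1) (by omega)]
    by_cases h1 : x = -1
    · subst h1; simp [mm]; field_simp
    · rw [mm_neg r (x + 1) (by omega)]; simp [h1]; omega
  · subst h; simp [mm]
  · by_cases h1 : x = 1
    · subst h1; simp [mm]; field_simp; ring
    · obtain ⟨n, rfl⟩ : ∃ n : ℕ, x = n + 2 := ⟨(x - 2).toNat, by omega⟩
      unfold mm
      have e1 : ((n : ℤ) + 2 + 1).toNat = n + 3 := by omega
      have e2 : ((n : ℤ) + 2 - 1).toNat = n + 1 := by omega
      rw [e1, e2, if_neg (show ¬((n : ℤ) + 2 + 1 = 0) by omega),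
        if_neg (show ¬((n : ℤ) + 2 - 1 = 0) by omega), if_neg (show ¬((n : ℤ) + 2 = -1) by omega),
        if_neg h1]
      have : Even ((n : ℤ) + 2 + 1) ↔ Even ((n : ℤ) + 2 - 1) := by
        rw [show (n : ℤ) + 2 + 1 = (n + 2 - 1) + 2 by ring, Int.even_add]; simp
      by_cases he : Even ((n : ℤ) + 2 - 1)
      · rw [if_pos ⟨by omega, this.2 he⟩, if_pos ⟨by omega, he⟩]
        rw [pow_add, pow_add]; field_simp; ring
      · rw [if_neg (fun h => he (this.1 h.2)), if_neg (fun h => he h.2)]; simp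

lemma mm_even (r : ℝ) (n : ℕ) :
    mm r (2 * n : ℤ) = (if n = 0 then 1 else 0) - (1 - (r ^ 2)⁻¹) * ((r ^ 2)⁻¹) ^ n := by
  unfold mm
  rcases Nat.eq_zero_or_pos n with h | h
  · subst h; simp
  · rw [if_neg (by omega), if_pos ⟨by omega, by simp⟩, if_neg (by omega)]
    have : (2 * (n : ℤ)).toNat = 2 * n := by omega
    rw [this, pow_mul, inv_pow]; ring

lemma mm_off (r : ℝ) (x : ℤ) (hx : x ∉ Set.range (fun n : ℕ => (2 * n : ℤ))) : mm r x = 0 := by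
  unfold mm
  rw [if_neg, if_neg]
  · rintro ⟨h1, ⟨y, hy⟩⟩
    exact hx ⟨y.toNat, by simp; omega⟩
  · rintro rfl; exact hx ⟨0, by simp⟩

lemma inj2 : Function.Injective (fun n : ℕ => (2 * n : ℤ)) := by
  intro x y h; simpa using h

lemma u_lt (r : ℝ) (hr : 1 < r) : (r ^ 2)⁻¹ < 1 := by
  apply inv_lt_one_of_one_lt₀; nlinarith

lemma mm_summable (r : ℝ) (hr : 1 < r) : Summable (mm r) := by
  rw [← inj2.summable_iff (f := mm r) (mm_off r)]
  have : (mm r ∘ fun n : ℕ => (2 * n : ℤ)) = fun n : ℕ =>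
      (if n = 0 then 1 else 0) - (1 - (r ^ 2)⁻¹) * ((r ^ 2)⁻¹) ^ n := by
    ext n; exact mm_even r n
  rw [this]
  apply Summable.sub
  · exact (hasSum_ite_eq 0 1).summable
  · exact (summable_geometric_of_lt_one (by positivity) (u_lt r hr)).mul_left _

lemma mm_sq (r : ℝ) (hr : 1 < r) :
    HasSum (fun x => (mm r x) ^ 2 + (-r * mm r x) ^ 2) (2 * (r ^ 2)⁻¹) := by
  rw [← inj2.hasSum_iff (by intro x hx; simp [mm_off r x hx])]
  set u := (r ^ 2)⁻¹ with hu
  have hu1 : u < 1 := u_lt r hr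
  have hu0 : 0 < u := by positivity
  have hru : r ^ 2 * u = 1 := by rw [hu]; field_simp
  have : ((fun x => (mm r x) ^ 2 + (-r * mm r x) ^ 2) ∘ fun n : ℕ => (2 * n : ℤ)) = fun n : ℕ =>
      (if n = 0 then (1 + r ^ 2) * (1 - 2 * (1 - u)) else 0)
        + (1 + r ^ 2) * (1 - u) ^ 2 * (u ^ 2) ^ n := by
    ext n
    simp only [Function.comp, mm_even, ← hu]
    rcases Nat.eq_zero_or_pos n with h | h
    · subst h; simp; ring
    · simp only [h.ne', if_false]; ring
  rw [this]
  have h1 := (hasSum_ite_eq (0 : ℕ) ((1 + r ^ 2) * (1 - 2 * (1 - u))))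
  have h2 := (hasSum_geometric_of_lt_one (r := u ^ 2) (by positivity) (by nlinarith)).mul_left
    ((1 + r ^ 2) * (1 - u) ^ 2)
  convert h1.add h2 using 1
  have h3 : 1 - u ^ 2 ≠ 0 := by nlinarith
  have hr2 : r ^ 2 = u⁻¹ := by rw [hu, inv_inv]
  rw [hr2]
  field_simp
  ring

section walk
variable {a b r : ℝ}

/-- the wall functional -/
noncomputable def wy (a b r : ℝ) (t : ℕ) (x : ℤ) : ℝ :=
  r * (wphi a b r t x).1 + (wphi a b r t x).2

lemma wphi_s1 (a b r : ℝ) (t : ℕ) (x : ℤ) : (wphi a b r (t+1) x).1 =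
    a * (wphi a b r t (x + 1)).1 - b * (wphi a b r t (x + 1)).2 := rfl
lemma wphi_s2 (a b r : ℝ) (t : ℕ) (x : ℤ) : (wphi a b r (t+1) x).2 =
    b * (wphi a b r t (x - 1)).1 + a * (wphi a b r t (x - 1)).2 := rfl

lemma wy_rec (h : Par a b r) (t : ℕ) (x : ℤ) :
    wy a b r (t + 2) x = a * (wy a b r (t + 1) (x + 1) + wy a b r (t + 1) (x - 1))
      - wy a b r t x := by
  have := h.sq
  simp only [wy, wphi_s1, wphi_s2, show t + 2 = (t + 1) + 1 from rfl, add_sub_cancel_right,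
    sub_add_cancel]
  have hb : b ^ 2 = 1 - a ^ 2 := by linarith
  ring_nf
  rw [hb]
  ring

lemma wy_odd (h : Par a b r) (t : ℕ) : (∀ x, wy a b r t (-x) = - wy a b r t x) ∧
    (∀ x, wy a b r (t + 1) (-x) = - wy a b r (t + 1) x) := by
  induction t with
  | zero =>
    constructor
    · intro x; simp [wy, wphi]
    · have key : ∀ x, wy a b r 1 x = (if x = -1 then 1 else 0) - (if x = 1 then 1 else 0) := by
        intro x
        rw [← mm_rec r h.hr x]
        simp only [wy, wphi]
        have h1 := h.e1
        have h2 := h.e2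
        linear_combination (r * mm r (x+1)) * h1 + mm r (x-1) * h2
      intro x
      rw [zero_add, key, key]
      have e1 : (-x = -1) ↔ x = 1 := by omega
      have e2 : (-x = 1) ↔ x = -1 := by omega
      simp [e1, e2]
  | succ n ih =>
    refine ⟨ih.2, fun x => ?_⟩
    rw [wy_rec h, wy_rec h, show -x + 1 = -(x - 1) by ring, show -x - 1 = -(x+1) by ring, ih.2, ih.2,
      ih.1]
    ring

lemma wphi_zero (h : Par a b r) (t : ℕ) : (wphi a b r t 0).2 = - r * (wphi a b r t 0).1 := by
  have := (wy_odd h t).1 0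
  simp only [wy, neg_zero] at this
  linarith

lemma psi_s1 (a b s : ℝ) (t x : ℕ) : (psi a b s (t+1) x).1 =
    (a : ℂ) * (psi a b s t (x + 1)).1 - (b : ℂ) * (psi a b s t (x + 1)).2 := rfl
lemma psi_s2 (a b s : ℝ) (t x : ℕ) : (psi a b s (t+1) (x + 2)).2 =
    (b : ℂ) * (psi a b s t (x + 1)).1 + (a : ℂ) * (psi a b s t (x + 1)).2 := by
  simp [psi]
lemma psi_s21 (a b s : ℝ) (t : ℕ) : (psi a b s (t+1) 1).2 = s * (psi a b s t 0).1 := by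
  simp [psi]
lemma psi_s20 (a b s : ℝ) (t : ℕ) : (psi a b s t 0).2 = 0 := by
  cases t <;> simp [psi]

lemma wloc_s1 (h : Par a b r) (t x : ℕ) : wloc r (t + 1) x = r * wloc r t (x + 1) := by
  have := h.hr
  have hr0 : r ≠ 0 := by positivity
  unfold wloc
  rw [show t + 1 + x = t + (x + 1) by ring]
  split_ifs
  · rw [pow_succ (n := x)]; linear_combination (-((1 - (r ^ 2)⁻¹) * (r⁻¹) ^ x)) * (mul_inv_cancel₀ hr0)
  · simp

lemma wloc_s2 (h : Par a b r) (t x : ℕ) : r * wloc r (t + 1) (x + 1) = wloc r t x := by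
  have := h.hr
  have hr0 : r ≠ 0 := by positivity
  unfold wloc
  have : Even (t + 1 + (x + 1)) ↔ Even (t + x) := by
    rw [show t + 1 + (x + 1) = (t + x) + 2 by ring]; simp [Nat.even_add]
  simp only [this]
  split_ifs
  · rw [pow_succ (n := x)]; linear_combination (((1 - (r ^ 2)⁻¹) * (r⁻¹) ^ x)) * (mul_inv_cancel₀ hr0)
  · simp

lemma psi_decomp (h : Par a b r) (t : ℕ) :
    (∀ x : ℕ, (psi a b (-1) t x).1 = ((wloc r t x + (wphi a b r t x).1 : ℝ) : ℂ)) ∧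
    (∀ x : ℕ, (psi a b (-1) t (x+1)).2 =
      ((-r * wloc r t (x+1) + (wphi a b r t (x+1 : ℕ)).2 : ℝ) : ℂ)) := by
  induction t with
  | zero =>
    constructor
    · intro x
      simp only [wphi]
      rw [add_comm, mm_nat r x h.hr]
      by_cases hx : x = 0 <;> simp [psi, hx]
    · intro x
      simp only [wphi]
      rw [← mul_add, add_comm (wloc r 0 (x+1)), mm_nat r (x+1) h.hr]
      simp [psi]
  | succ n ih =>
    obtain ⟨ih1, ih2⟩ := ih
    constructor
    · intro x
      rw [psi_s1, ih1, ih2, wphi_s1, wloc_s1 h]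
      norm_cast
      push_cast
      linear_combination (wloc r n (x+1)) * h.e1
    · intro x
      cases x with
      | zero =>
        rw [psi_s21, ih1, wphi_s2, show ((0 + 1 : ℕ) : ℤ) - 1 = 0 by simp, wphi_zero h]
        norm_cast
        have := wloc_s2 h n 0
        push_cast
        linear_combination this - (wphi a b r n 0).1 * h.e2
      | succ y =>
        rw [psi_s2, ih1, ih2, wphi_s2, show (((y + 1 + 1 : ℕ) : ℤ) - 1) = ((y + 1 : ℕ) : ℤ) by simp]
        norm_cast
        have := wloc_s2 h n (y+1)
        linear_combination this + (wloc r n (y+1)) * h.e2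

/-- conservation on the half line -/
lemma prob_supp (a b s : ℝ) (t x : ℕ) (hx : t < x) : psi a b s t x = 0 := by
  induction t generalizing x with
  | zero => simp [psi, show x ≠ 0 by omega]
  | succ n ih =>
    obtain ⟨y, rfl⟩ : ∃ y, x = y + 2 := ⟨x - 2, by omega⟩
    ext
    · rw [psi_s1, ih _ (by omega)]; simp
    · rw [psi_s2, ih _ (by omega)]; simp

lemma prob_summable (a b s : ℝ) (t : ℕ) (g : ℕ → ℝ) : Summable (fun x => prob a b s t x * g x) := by
  apply summable_of_ne_finset_zero (s := Finset.range (t + 1))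
  intro x hx
  simp at hx
  simp [prob, prob_supp a b s t x (by omega)]

lemma coin_id (h : a ^ 2 + b ^ 2 = 1) (z w : ℂ) :
    ‖(a : ℂ) * z - b * w‖ ^ 2 + ‖(b : ℂ) * z + a * w‖ ^ 2 = ‖z‖ ^ 2 + ‖w‖ ^ 2 := by
  simp only [← Complex.normSq_eq_norm_sq, Complex.normSq_apply]
  simp
  linear_combination (z.re ^ 2 + z.im ^ 2 + w.re ^ 2 + w.im ^ 2) * h

lemma prob_total (h : Par a b r) (t : ℕ) : ∑' x, prob a b (-1) t x = 1 := by
  induction t with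
  | zero =>
    rw [tsum_eq_single 0]
    · simp [prob, psi]
    · intro x hx; simp [prob, psi, hx]
  | succ n ih =>
    have hs : ∀ t, Summable (fun x => prob a b (-1) t x) := fun t => by
      simpa using prob_summable a b (-1) t (fun _ => 1)
    have hL : ∀ t, Summable (fun x => ‖(psi a b (-1) t x).1‖ ^ 2) := fun t =>
      (hs t).of_nonneg_of_le (fun x => by positivity) (fun x => by unfold prob; simp)
    have hR : ∀ t, Summable (fun x => ‖(psi a b (-1) t x).2‖ ^ 2) := fun t =>
      (hs t).of_nonneg_of_le (fun x => by positivity) (fun x => by unfold prob; simp)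
    have e1 : ∑' x, prob a b (-1) n x = prob a b (-1) n 0 + ∑' x, prob a b (-1) n (x+1) :=
      (hs n).tsum_eq_zero_add
    have e2 : ∑' x, prob a b (-1) (n+1) x = ∑' x, ‖(psi a b (-1) (n+1) x).1‖ ^ 2
        + ∑' x, ‖(psi a b (-1) (n+1) x).2‖ ^ 2 := by
      rw [← (hL _).tsum_add (hR _)]; rfl
    have e3 : ∑' x, ‖(psi a b (-1) (n+1) x).2‖ ^ 2 = ‖(psi a b (-1) n 0).1‖ ^ 2
       + ∑' x, ‖(psi a b (-1) (n+1) (x + 2)).2‖ ^ 2 := by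
      rw [(hR _).tsum_eq_zero_add, ((summable_nat_add_iff 1).2 (hR _)).tsum_eq_zero_add]
      simp [psi_s20, psi_s21]
    have hR2 := (summable_nat_add_iff 2).2 (hR (n+1))
    refine Eq.trans ?_ ih
    rw [e1, e2, e3, add_left_comm, ← (hL _).tsum_add hR2]
    congr 1
    · simp [prob, psi_s20]
    · congr 1
      ext x
      rw [psi_s1, psi_s2, coin_id h.sq]; rfl

end walk


/-- Fourier series of an integer sequence -/
noncomputable def hat (c : ℤ → ℂ) (k : ℝ) : ℂ := ∑' x : ℤ, c x * Complex.exp (Complex.I * k * x)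

lemma norm_exp_I (k : ℝ) (x : ℤ) : ‖Complex.exp (Complex.I * k * x)‖ = 1 := by
  rw [show Complex.I * k * x = ((k * x : ℝ) : ℂ) * Complex.I by push_cast; ring]
  exact Complex.norm_exp_ofReal_mul_I _

lemma hat_summable {c : ℤ → ℂ} (hc : Summable (fun x => ‖c x‖)) (k : ℝ) :
    Summable (fun x : ℤ => c x * Complex.exp (Complex.I * k * x)) := by
  apply Summable.of_norm
  simpa [norm_exp_I] using hc

lemma hat_continuous {c : ℤ → ℂ} (hc : Summable (fun x => ‖c x‖)) : Continuous (hat c) := by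
  unfold hat
  apply continuous_tsum (u := fun x => ‖c x‖)
  · intro x; fun_prop
  · exact hc
  · intro x k; simp [norm_exp_I]

lemma hat_shift {c : ℤ → ℂ} (m : ℤ) (k : ℝ) :
    hat (fun x => c (x + m)) k = Complex.exp (-(Complex.I * k * m)) * hat c k := by
  unfold hat
  rw [← tsum_mul_left, ← (Equiv.addRight m).tsum_eq
    (fun x : ℤ => Complex.exp (-(Complex.I * k * m)) * (c x * Complex.exp (Complex.I * k * x)))]
  congr 1
  ext x
  simp only [Equiv.coe_addRight]
  rw [mul_left_comm, ← Complex.exp_add]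
  congr 2
  push_cast; ring

lemma hat_twist {c : ℤ → ℂ} (k ξ : ℝ) :
    hat (fun x => c x * Complex.exp (Complex.I * ξ * x)) k = hat c (k + ξ) := by
  unfold hat
  congr 1
  ext x
  rw [mul_assoc, ← Complex.exp_add]
  congr 2
  push_cast; ring

lemma hat_lin {c d : ℤ → ℂ} (hc : Summable (fun x => ‖c x‖)) (hd : Summable (fun x => ‖d x‖))
    (α β : ℂ) (k : ℝ) : hat (fun x => α * c x + β * d x) k = α * hat c k + β * hat d k := by
  unfold hat
  rw [← tsum_mul_left, ← tsum_mul_left,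
    ← ((hat_summable hc k).mul_left α).tsum_add ((hat_summable hd k).mul_left β)]
  congr 1
  ext x
  ring

lemma int_exp (n : ℤ) :
    ∫ k in (-Real.pi)..Real.pi, Complex.exp (Complex.I * k * n) =
      if n = 0 then 2 * (Real.pi : ℂ) else 0 := by
  split_ifs with h
  · subst h; simp; ring
  · have hc : Complex.I * (n : ℂ) ≠ 0 := by
      simp [h]
    have := integral_exp_mul_complex (a := -Real.pi) (b := Real.pi) hc
    rw [show (fun k : ℝ => Complex.exp (Complex.I * k * n)) =
      fun k : ℝ => Complex.exp (Complex.I * n * k) by ext k; congr 1; ring, this]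
    have : Complex.exp (Complex.I * n * (Real.pi : ℝ)) =
        Complex.exp (Complex.I * n * ((-Real.pi : ℝ) : ℂ)) := by
      rw [Complex.exp_eq_exp_iff_exists_int]
      exact ⟨n, by push_cast; ring⟩
    rw [this]; simp

lemma coeff_hat {d : ℤ → ℂ} (hd : Summable (fun x => ‖d x‖)) (n : ℤ) :
    ∫ k in (-Real.pi)..Real.pi, Complex.exp (-(Complex.I * k * n)) * hat d k
      = 2 * (Real.pi : ℂ) * d n := by
  have H := intervalIntegral.hasSum_integral_of_dominated_convergence (μ := volume)
    (a := -Real.pi) (b := Real.pi)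
    (F := fun (x : ℤ) (k : ℝ) => Complex.exp (-(Complex.I * k * n)) *
      (d x * Complex.exp (Complex.I * k * x)))
    (f := fun k => Complex.exp (-(Complex.I * k * n)) * hat d k)
    (fun x _ => ‖d x‖)
    (fun x => by apply Continuous.aestronglyMeasurable; fun_prop)
    (fun x => by
      refine Eventually.of_forall fun k _ => ?_
      rw [norm_mul, norm_mul, Complex.exp_neg, norm_inv, norm_exp_I, norm_exp_I]; simp)
    (by exact Eventually.of_forall fun k _ => hd)
    (by simp)
    (by
      refine Eventually.of_forall fun k _ => ?_
      exact (hat_summable hd k).hasSum.mul_left _)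
  have e : ∀ x : ℤ, ∫ k in (-Real.pi)..Real.pi, Complex.exp (-(Complex.I * k * n)) *
      (d x * Complex.exp (Complex.I * k * x)) = if x = n then 2 * (Real.pi : ℂ) * d n else 0 := by
    intro x
    have : (fun k : ℝ => Complex.exp (-(Complex.I * k * n)) *
      (d x * Complex.exp (Complex.I * k * x))) =
      fun k : ℝ => d x * Complex.exp (Complex.I * k * (x - n : ℤ)) := by
      ext k
      rw [mul_left_comm, ← Complex.exp_add]
      congr 2
      push_cast; ring
    rw [this, intervalIntegral.integral_const_mul, int_exp]
    by_cases hx : x = n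
    · subst hx; simp; ring
    · simp [hx, sub_eq_zero]
  simp only [e] at H
  exact H.unique (hasSum_ite_eq n _)

lemma parseval {c d : ℤ → ℂ} (hc : Summable (fun x => ‖c x‖)) (hd : Summable (fun x => ‖d x‖)) :
    HasSum (fun x => (starRingEnd ℂ) (c x) * d x)
     ((2 * (Real.pi : ℂ))⁻¹ * ∫ k in (-Real.pi)..Real.pi, (starRingEnd ℂ) (hat c k) * hat d k) := by
  have hcont := hat_continuous hd
  obtain ⟨K, hK⟩ : ∃ K, ∀ k, ‖hat d k‖ ≤ K := by
    refine ⟨∑' x, ‖d x‖, fun k => ?_⟩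
    unfold hat
    refine (norm_tsum_le_tsum_norm ?_).trans (le_of_eq ?_)
    · simpa [norm_exp_I] using hd
    · simp [norm_exp_I]
  have H := intervalIntegral.hasSum_integral_of_dominated_convergence (μ := volume)
    (a := -Real.pi) (b := Real.pi)
    (F := fun (x : ℤ) (k : ℝ) => (starRingEnd ℂ) (c x) *
      (Complex.exp (-(Complex.I * k * x)) * hat d k))
    (f := fun k => (starRingEnd ℂ) (hat c k) * hat d k)
    (fun x _ => ‖c x‖ * K)
    (fun x => by apply Continuous.aestronglyMeasurable; fun_prop)
    (fun x => by
      refine Eventually.of_forall fun k _ => ?_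
      rw [norm_mul, norm_mul, Complex.exp_neg, norm_inv, norm_exp_I, RCLike.norm_conj]
      simpa using mul_le_mul_of_nonneg_left (hK k) (norm_nonneg _))
    (by exact Eventually.of_forall fun k _ => hc.mul_right K)
    (by simp)
    (by
      refine Eventually.of_forall fun k _ => ?_
      have := ((hat_summable hc k).hasSum.map (starRingEnd ℂ) Complex.continuous_conj).mul_right
        (hat d k)
      convert! this using 1
      funext x
      simp only [Function.comp, map_mul, ← Complex.exp_conj, Complex.conj_I, Complex.conj_ofReal,
        map_intCast]
      rw [← mul_assoc, show -Complex.I * (k : ℂ) * (x : ℂ) = -(Complex.I * k * x) by ring])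
  simp only [intervalIntegral.integral_const_mul, coeff_hat hd] at H
  convert! H.mul_left (2 * (Real.pi : ℂ))⁻¹ using 1
  funext x
  have : (Real.pi : ℂ) ≠ 0 := by exact_mod_cast Real.pi_ne_zero
  field_simp


noncomputable def om (a k : ℝ) : ℝ := Real.arccos (a * Real.cos k)
noncomputable def so (a k : ℝ) : ℝ := Real.sqrt (1 - (a * Real.cos k) ^ 2)
noncomputable def vel (a k : ℝ) : ℝ := a * Real.sin k / so a k
noncomputable def EE (k : ℝ) : ℂ := Complex.exp (Complex.I * k)
noncomputable def FF (k : ℝ) : ℂ := Complex.exp (-(Complex.I * k))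
noncomputable def mh (r k : ℝ) : ℂ := (FF k - EE k) / (r ^ 2 * FF k - EE k)
noncomputable def pp (a r k : ℝ) : ℂ := (r * FF k - (a * Real.cos k : ℝ)) / (so a k : ℝ)
noncomputable def qq (a r k : ℝ) : ℂ := (r * (a * Real.cos k : ℝ) - EE k) / (so a k : ℝ)

lemma EF (k : ℝ) : EE k * FF k = 1 := by
  unfold EE FF; rw [← Complex.exp_add]; simp
lemma EF2 (k : ℝ) : EE k + FF k = 2 * (Real.cos k : ℂ) := by
  unfold EE FF; rw [Complex.ofReal_cos, Complex.two_cos]; 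
  rw [mul_comm Complex.I, neg_mul]
lemma conjE (k : ℝ) : (starRingEnd ℂ) (EE k) = FF k := by
  unfold EE FF; rw [← Complex.exp_conj]; simp
lemma conjF (k : ℝ) : (starRingEnd ℂ) (FF k) = EE k := by
  rw [← conjE, Complex.conj_conj]
lemma normE (k : ℝ) : ‖EE k‖ = 1 := by
  have := norm_exp_I k 1; simpa [EE] using this
lemma normF (k : ℝ) : ‖FF k‖ = 1 := by
  rw [← conjE, RCLike.norm_conj, normE]
lemma EE_cont : Continuous EE := by unfold EE; fun_prop
lemma FF_cont : Continuous FF := by unfold FF; fun_prop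

section
variable {a b r : ℝ}

lemma so_sq_ge (h : Par a b r) (k : ℝ) : b ^ 2 ≤ 1 - (a * Real.cos k) ^ 2 := by
  have h1 := h.sq
  have := Real.sin_sq_add_cos_sq k
  nlinarith [mul_nonneg (sq_nonneg a) (sq_nonneg (Real.sin k))]

lemma so_ge (h : Par a b r) (k : ℝ) : b ≤ so a k :=
  Real.le_sqrt_of_sq_le (so_sq_ge h k)
lemma so_pos (h : Par a b r) (k : ℝ) : 0 < so a k := h.bpos.trans_le (so_ge h k)
lemma so_sq (h : Par a b r) (k : ℝ) : so a k ^ 2 = 1 - (a * Real.cos k) ^ 2 :=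
  Real.sq_sqrt ((sq_nonneg b).trans (so_sq_ge h k))
lemma so_cont : Continuous (so a) := by unfold so; fun_prop
lemma ac_lt (h : Par a b r) (k : ℝ) : -1 < a * Real.cos k ∧ a * Real.cos k < 1 := by
  have := so_sq_ge h k
  have hb := h.bpos
  have : (a * Real.cos k) ^ 2 < 1 := by nlinarith
  exact abs_lt.1 (by rwa [sq_lt_one_iff_abs_lt_one] at this)

lemma cos_om (h : Par a b r) (k : ℝ) : Real.cos (om a k) = a * Real.cos k :=
  Real.cos_arccos (ac_lt h k).1.le (ac_lt h k).2.le
lemma sin_om (k : ℝ) : Real.sin (om a k) = so a k := Real.sin_arccos _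

lemma om_deriv (h : Par a b r) (k : ℝ) : HasDerivAt (om a) (vel a k) k := by
  have h1 := (Real.hasDerivAt_arccos (ac_lt h k).1.ne' (ac_lt h k).2.ne).comp k
    ((Real.hasDerivAt_cos k).const_mul a)
  convert! h1 using 1
  unfold vel so
  ring

lemma den_ne (h : Par a b r) (k : ℝ) : (r : ℂ) ^ 2 * FF k - EE k ≠ 0 := by
  intro h0
  have h1 : (r : ℂ) ^ 2 * FF k = EE k := sub_eq_zero.1 h0
  have h2 := congrArg norm h1
  rw [norm_mul, normE, normF, mul_one] at h2
  have := h.hr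
  rw [norm_pow, Complex.norm_real, Real.norm_eq_abs, sq_abs] at h2
  nlinarith

lemma mh_cont (h : Par a b r) : Continuous (mh r) := by
  unfold mh
  have := EE_cont; have := FF_cont
  exact Continuous.div (by fun_prop) (by fun_prop) (den_ne h)

lemma soC (h : Par a b r) (k : ℝ) : (so a k : ℂ) ≠ 0 := by
  exact_mod_cast (so_pos h k).ne'

lemma pp_cont (h : Par a b r) : Continuous (pp a r) := by
  unfold pp
  have := EE_cont; have := FF_cont; have := so_cont (a := a)
  exact Continuous.div (by fun_prop) (by fun_prop) (soC h)
lemma qq_cont (h : Par a b r) : Continuous (qq a r) := by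
  unfold qq
  have := EE_cont; have := FF_cont; have := so_cont (a := a)
  exact Continuous.div (by fun_prop) (by fun_prop) (soC h)
lemma vel_cont (h : Par a b r) : Continuous (vel a) := by
  unfold vel
  have := so_cont (a := a)
  exact Continuous.div (by fun_prop) (by fun_prop) (fun k => (so_pos h k).ne')

/-- explicit hats -/
noncomputable def AA (a r : ℝ) (t : ℕ) (k : ℝ) : ℂ :=
  mh r k * (Real.cos (t * om a k) + pp a r k * Real.sin (t * om a k))
noncomputable def BB (a r : ℝ) (t : ℕ) (k : ℝ) : ℂ :=
  mh r k * (-r * Real.cos (t * om a k) + qq a r k * Real.sin (t * om a k))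

lemma cC (h : Par a b r) (k : ℝ) : 2 * ((a * Real.cos k : ℝ) : ℂ) = a * (EE k + FF k) := by
  rw [EF2]; push_cast; ring

lemma soC_sq (h : Par a b r) (k : ℝ) : (so a k : ℂ) ^ 2 = 1 - ((a * Real.cos k : ℝ) : ℂ) ^ 2 := by
  exact_mod_cast so_sq h k

lemma e1C (h : Par a b r) : (a : ℂ) + b * r = r := by exact_mod_cast h.e1
lemma e2C (h : Par a b r) : (b : ℂ) - a * r = -1 := by exact_mod_cast h.e2

lemma AA_succ (h : Par a b r) (t : ℕ) (k : ℝ) :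
    AA a r (t + 1) k = FF k * (a * AA a r t k - b * BB a r t k) := by
  have h1 : ((t + 1 : ℕ) : ℝ) * om a k = t * om a k + om a k := by push_cast; ring
  unfold AA BB
  rw [h1, Real.cos_add, Real.sin_add, cos_om h, sin_om]
  generalize Real.cos (t * om a k) = C
  generalize Real.sin (t * om a k) = S
  have hs := soC h k
  have hs2 := soC_sq h k
  have hc := cC h k
  unfold pp qq
  push_cast at hs2 hc ⊢
  generalize (a : ℂ) * Complex.cos k = co at *
  generalize (so a k : ℂ) = s at *
  have hEF := EF k
  have e1 := e1C h
  have e2 := e2C h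
  field_simp
  linear_combination mh r k * (-C * s * FF k * e1 - S * hs2 + S * FF k * co * e1
    + S * r * FF k * hc - S * EE k * FF k * e2 + S * hEF)

lemma BB_succ (h : Par a b r) (t : ℕ) (k : ℝ) :
    BB a r (t + 1) k = EE k * (b * AA a r t k + a * BB a r t k) := by
  have h1 : ((t + 1 : ℕ) : ℝ) * om a k = t * om a k + om a k := by push_cast; ring
  unfold AA BB
  rw [h1, Real.cos_add, Real.sin_add, cos_om h, sin_om]
  generalize Real.cos (t * om a k) = C
  generalize Real.sin (t * om a k) = S
  have hs := soC h k
  have hs2 := soC_sq h k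
  have hc := cC h k
  unfold pp qq
  push_cast at hs2 hc ⊢
  generalize (a : ℂ) * Complex.cos k = co at *
  generalize (so a k : ℂ) = s at *
  have hEF := EF k
  have e1 := e1C h
  have e2 := e2C h
  field_simp
  linear_combination mh r k * (-EE k * C * s * e2 + S * r * hs2 + S * EE k * co * e2
    - S * EE k * hc - S * EE k * FF k * e1 - S * r * hEF)

lemma pq1 (h : Par a b r) (k : ℝ) : pp a r k = r * qq a r k := by
  have hs := soC h k
  have hc := cC h k
  unfold pp qq
  generalize ((a * Real.cos k : ℝ) : ℂ) = co at *
  have e : (a : ℂ) * (1 + r ^ 2) = 2 * r := by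
    linear_combination e1C h - (r : ℂ) * e2C h
  have ha : (a : ℂ) ≠ 0 := by exact_mod_cast h.apos.ne'
  rw [← mul_div_assoc]
  congr 1
  have : (a : ℂ) * (r * FF k - co - r * (r * co - EE k)) = 0 := by
    linear_combination -(r : ℂ) * hc - co * e
  have := (mul_eq_zero.1 this).resolve_left ha
  linear_combination this

lemma pq2 (h : Par a b r) (k : ℝ) : (starRingEnd ℂ) (pp a r k) * pp a r k +
    (starRingEnd ℂ) (qq a r k) * qq a r k = 1 + r ^ 2 := by
  have hs := soC h k
  have hs2 := soC_sq h k
  have hc := cC h k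
  unfold pp qq
  simp only [map_div₀, map_sub, map_mul, Complex.conj_ofReal, conjE, conjF]
  generalize ((a * Real.cos k : ℝ) : ℂ) = co at *
  have e : (a : ℂ) * (1 + r ^ 2) = 2 * r := by
    linear_combination e1C h - (r : ℂ) * e2C h
  have ha : (a : ℂ) ≠ 0 := by exact_mod_cast h.apos.ne'
  have hEF := EF k
  field_simp
  rw [hs2]
  have : (a : ℂ) * ((r * EE k - co) * (r * FF k - co) + (r * co - FF k) * (r * co - EE k)
    - (1 - co ^ 2) * (1 + r ^ 2)) = 0 := by
    linear_combination (a : ℂ) * (r ^ 2 + 1) * hEF + 2 * r * co * hc + 2 * co ^ 2 * e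
  have := (mul_eq_zero.1 this).resolve_left ha
  linear_combination this

lemma mh_sq (h : Par a b r) (k : ℝ) : (starRingEnd ℂ) (mh r k) * mh r k * (1 + r ^ 2) =
    (((1 + (r ^ 2)⁻¹) * vel a k ^ 2 : ℝ) : ℂ) := by
  have hr0 : r ≠ 0 := by have := h.hr; positivity
  have e1 : (starRingEnd ℂ) (FF k - EE k) * (FF k - EE k) = ((4 * Real.sin k ^ 2 : ℝ) : ℂ) := by
    have h1 : Real.sin k ^ 2 = 1 - Real.cos k ^ 2 := by
      have := Real.sin_sq_add_cos_sq k; linarith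
    rw [h1, map_sub, conjE, conjF]
    have h2 := EF2 k
    have h3 := EF k
    push_cast at h2 ⊢
    linear_combination 4 * h3 - (EE k + FF k + 2 * Complex.cos k) * h2
  have e2 : (starRingEnd ℂ) (r ^ 2 * FF k - EE k) * (r ^ 2 * FF k - EE k) =
      (((1 + r ^ 2) ^ 2 * so a k ^ 2 : ℝ) : ℂ) := by
    rw [so_sq h, h.ha]
    simp only [map_sub, map_mul, conjE, conjF, map_pow, Complex.conj_ofReal]
    have h2 := EF2 k
    have h3 := EF k
    have : (1 + (r : ℂ) ^ 2) ≠ 0 := by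
      have : (1 + r ^ 2) ≠ 0 := by positivity
      exact_mod_cast this
    push_cast at h2 ⊢
    field_simp
    linear_combination (r ^ 4 + 1 + 2 * r ^ 2) * h3 - r ^ 2 * (EE k + FF k + 2 * Complex.cos k) * h2
  have hd := den_ne h k
  have hd2 : (starRingEnd ℂ) (r ^ 2 * FF k - EE k) ≠ 0 := by
    rw [Ne, map_eq_zero]; exact hd
  unfold mh
  rw [map_div₀, div_mul_div_comm, e1, e2]
  norm_cast
  unfold vel
  have := so_pos h k
  have h5 : (1 + r ^ 2) ≠ 0 := by positivity
  rw [h.ha]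
  field_simp
  ring

end


section
variable {a b r : ℝ}

lemma wphi_summable (h : Par a b r) (t : ℕ) :
    Summable (fun x => (wphi a b r t x).1) ∧ Summable (fun x => (wphi a b r t x).2) := by
  induction t with
  | zero => exact ⟨mm_summable r h.hr, (mm_summable r h.hr).mul_left _⟩
  | succ n ih =>
    have s1 := (Equiv.addRight (1 : ℤ)).summable_iff.2 ih.1
    have s2 := (Equiv.addRight (1 : ℤ)).summable_iff.2 ih.2
    have s3 := (Equiv.addRight (-1 : ℤ)).summable_iff.2 ih.1
    have s4 := (Equiv.addRight (-1 : ℤ)).summable_iff.2 ih.2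
    exact ⟨(s1.mul_left a).sub (s2.mul_left b), (s3.mul_left b).add (s4.mul_left a)⟩

noncomputable def wL (a b r : ℝ) (t : ℕ) (x : ℤ) : ℂ := ((wphi a b r t x).1 : ℂ)
noncomputable def wR (a b r : ℝ) (t : ℕ) (x : ℤ) : ℂ := ((wphi a b r t x).2 : ℂ)

lemma wL_summable (h : Par a b r) (t : ℕ) : Summable (fun x => ‖wL a b r t x‖) := by
  simpa [wL] using (wphi_summable h t).1.abs
lemma wR_summable (h : Par a b r) (t : ℕ) : Summable (fun x => ‖wR a b r t x‖) := by
  simpa [wR] using (wphi_summable h t).2.abs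

lemma hat_single (n : ℤ) (k : ℝ) : hat (fun x => if x = n then 1 else 0) k =
    Complex.exp (Complex.I * k * n) := by
  unfold hat
  rw [tsum_eq_single n]
  · simp
  · intro x hx; simp [hx]

lemma single_summable (n : ℤ) : Summable (fun x : ℤ => ‖(if x = n then (1 : ℂ) else 0)‖) := by
  apply summable_of_ne_finset_zero (s := {n})
  intro x hx; simp at hx; simp [hx]

lemma shift_summable {c : ℤ → ℂ} (hc : Summable (fun x => ‖c x‖)) (m : ℤ) :
    Summable (fun x => ‖c (x + m)‖) :=
  (Equiv.addRight m).summable_iff.2 hc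

lemma hat_mm (h : Par a b r) (k : ℝ) : hat (wL a b r 0) k = mh r k := by
  have hs := wL_summable h 0
  have e : (fun x => (r : ℂ) ^ 2 * wL a b r 0 (x + 1) + (-1) * wL a b r 0 (x + (-1))) =
      fun x : ℤ => 1 * (if x = -1 then 1 else 0) + (-1) * (if x = 1 then 1 else 0) := by
    funext x
    have := congrArg (fun y : ℝ => (y : ℂ)) (mm_rec r h.hr x)
    simp only [wL, wphi]
    push_cast at this
    simp only [apply_ite Complex.ofReal, Complex.ofReal_one, Complex.ofReal_zero] at this
    rw [← sub_eq_add_neg x 1]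
    linear_combination this
  have e2 := congrFun (congrArg hat e) k
  rw [hat_lin (shift_summable hs 1) (shift_summable hs (-1)),
    hat_lin (single_summable _) (single_summable _), hat_shift, hat_shift, hat_single, hat_single] at e2
  have f1 : Complex.exp (-(Complex.I * k * (1 : ℤ))) = FF k := by simp [FF]
  have f2 : Complex.exp (-(Complex.I * k * (-1 : ℤ))) = EE k := by simp [EE]
  have f3 : Complex.exp (Complex.I * k * (1 : ℤ)) = EE k := by simp [EE]
  have f4 : Complex.exp (Complex.I * k * (-1 : ℤ)) = FF k := by simp [FF]
  rw [f1, f2, f3, f4] at e2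
  unfold mh
  rw [eq_div_iff (den_ne h k)]
  linear_combination e2

lemma hat_eq (h : Par a b r) (t : ℕ) (k : ℝ) :
    hat (wL a b r t) k = AA a r t k ∧ hat (wR a b r t) k = BB a r t k := by
  induction t with
  | zero =>
    have h0 := hat_mm h k
    constructor
    · simp [h0, AA]
    · have : wR a b r 0 = fun x => (-r : ℂ) * wL a b r 0 x + 0 * wL a b r 0 x := by
        funext x; simp [wR, wL, wphi]
      rw [this, hat_lin (wL_summable h 0) (wL_summable h 0), h0]
      simp [BB]; ring
  | succ n ih =>
    have hL := wL_summable h n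
    have hR := wR_summable h n
    constructor
    · have : wL a b r (n+1) = fun x => (a : ℂ) * wL a b r n (x+1) + (-b) * wR a b r n (x+1) := by
        funext x; simp [wR, wL, wphi_s1]; ring
      rw [this, hat_lin (shift_summable hL 1) (shift_summable hR 1), hat_shift, hat_shift,
        ih.1, ih.2, AA_succ h]
      have f1 : Complex.exp (-(Complex.I * k * (1 : ℤ))) = FF k := by simp [FF]
      rw [f1]; ring
    · have : wR a b r (n+1) = fun x => (b : ℂ) * wL a b r n (x+(-1)) + a * wR a b r n (x+(-1)) := by
        funext x; simp [wR, wL, wphi_s2, sub_eq_add_neg]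
      rw [this, hat_lin (shift_summable hL _) (shift_summable hR _), hat_shift, hat_shift,
        ih.1, ih.2, BB_succ h]
      have f1 : Complex.exp (-(Complex.I * k * (-1 : ℤ))) = EE k := by simp [EE]
      rw [f1]; ring

noncomputable def QQ (a b r : ℝ) (t : ℕ) (x : ℤ) : ℝ :=
  (wphi a b r t x).1 ^ 2 + (wphi a b r t x).2 ^ 2

lemma QQ_nonneg (t : ℕ) (x : ℤ) : 0 ≤ QQ a b r t x := by unfold QQ; positivity

noncomputable def GG (a r : ℝ) (t : ℕ) (ξ k : ℝ) : ℂ :=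
  (starRingEnd ℂ) (AA a r t k) * AA a r t (k + ξ) + (starRingEnd ℂ) (BB a r t k) * BB a r t (k + ξ)

lemma AA_cont (h : Par a b r) (t : ℕ) : Continuous (AA a r t) := by
  have := hat_continuous (wL_summable h t)
  convert this using 1
  funext k; exact (hat_eq h t k).1.symm
lemma BB_cont (h : Par a b r) (t : ℕ) : Continuous (BB a r t) := by
  have := hat_continuous (wR_summable h t)
  convert this using 1
  funext k; exact (hat_eq h t k).2.symm

lemma GG_cont (h : Par a b r) (t : ℕ) (ξ : ℝ) : Continuous (GG a r t ξ) := by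
  have := AA_cont h t; have := BB_cont h t
  unfold GG
  have hc := Complex.continuous_conj
  exact ((hc.comp (by fun_prop)).mul (by fun_prop)).add ((hc.comp (by fun_prop)).mul (by fun_prop))

lemma QQ_char (h : Par a b r) (t : ℕ) (ξ : ℝ) :
    HasSum (fun x : ℤ => (QQ a b r t x : ℂ) * Complex.exp (Complex.I * ξ * x))
      ((2 * (Real.pi : ℂ))⁻¹ * ∫ k in (-Real.pi)..Real.pi, GG a r t ξ k) := by
  have tw : ∀ c : ℤ → ℂ, Summable (fun x => ‖c x‖) →
      Summable (fun x => ‖c x * Complex.exp (Complex.I * ξ * x)‖) := by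
    intro c hc; simpa [norm_exp_I] using hc
  have hL := wL_summable h t
  have hR := wR_summable h t
  have p1 := parseval hL (tw _ hL)
  have p2 := parseval hR (tw _ hR)
  have p3 := p1.add p2
  simp only [hat_twist, (hat_eq h t _).1, (hat_eq h t _).2] at p3
  rw [← mul_add, ← intervalIntegral.integral_add] at p3
  · convert! p3 using 1
    funext x
    simp only [QQ, wL, wR, Complex.conj_ofReal]
    push_cast
    ring
  · apply Continuous.intervalIntegrable
    have := AA_cont h t
    exact (Complex.continuous_conj.comp this).mul (by fun_prop)
  · apply Continuous.intervalIntegrable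
    have := BB_cont h t
    exact (Complex.continuous_conj.comp this).mul (by fun_prop)

lemma QQ_total (h : Par a b r) (t : ℕ) : HasSum (QQ a b r t) (2 * (r ^ 2)⁻¹) := by
  induction t with
  | zero => exact mm_sq r h.hr
  | succ n ih =>
    have hs := ih.summable
    have hL : Summable (fun x => (a * (wphi a b r n x).1 - b * (wphi a b r n x).2) ^ 2) := by
      refine hs.of_nonneg_of_le (fun x => by positivity) (fun x => ?_)
      have := h.sq
      simp only [QQ]
      nlinarith [sq_nonneg (b * (wphi a b r n x).1 + a * (wphi a b r n x).2)]
    have hR : Summable (fun x => (b * (wphi a b r n x).1 + a * (wphi a b r n x).2) ^ 2) := by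
      refine hs.of_nonneg_of_le (fun x => by positivity) (fun x => ?_)
      have := h.sq
      simp only [QQ]
      nlinarith [sq_nonneg (a * (wphi a b r n x).1 - b * (wphi a b r n x).2)]
    have e := hL.hasSum.add hR.hasSum
    have e' : ∑' x, (a * (wphi a b r n x).1 - b * (wphi a b r n x).2) ^ 2 +
      ∑' x, (b * (wphi a b r n x).1 + a * (wphi a b r n x).2) ^ 2 = 2 * (r ^ 2)⁻¹ := by
      apply e.unique
      convert! ih using 1
      funext x
      simp only [QQ]
      linear_combination ((wphi a b r n x).1 ^ 2 + (wphi a b r n x).2 ^ 2) * h.sq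
    rw [← e']
    have f1 := (Equiv.addRight (1 : ℤ)).hasSum_iff.2 hL.hasSum
    have f2 := (Equiv.addRight (-1 : ℤ)).hasSum_iff.2 hR.hasSum
    have f3 := f1.add f2
    have f4 : QQ a b r (n + 1) = fun x => ((fun x => (a * (wphi a b r n x).1 -
        b * (wphi a b r n x).2) ^ 2) ∘ (Equiv.addRight (1 : ℤ))) x +
        ((fun x => (b * (wphi a b r n x).1 + a * (wphi a b r n x).2) ^ 2) ∘
          (Equiv.addRight (-1 : ℤ))) x := by
      funext x
      simp only [Function.comp, Equiv.coe_addRight, QQ, wphi_s1, wphi_s2, ← sub_eq_add_neg]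
    rw [f4]
    exact f3

lemma GG_formula (h : Par a b r) (t : ℕ) (ξ k : ℝ) : GG a r t ξ k =
    (starRingEnd ℂ) (mh r k) * mh r (k + ξ) *
    ((1 + r ^ 2) * (Real.cos (t * om a (k + ξ) - t * om a k) : ℝ) +
      ((starRingEnd ℂ) (pp a r k) * pp a r (k + ξ) + (starRingEnd ℂ) (qq a r k) * qq a r (k + ξ)
        - (1 + r ^ 2)) * (Real.sin (t * om a k) * Real.sin (t * om a (k + ξ)) : ℝ)) := by
  unfold GG AA BB
  rw [Real.cos_sub]
  have h1 := pq1 h (k + ξ)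
  have h2 := congrArg (starRingEnd ℂ) (pq1 h k)
  rw [map_mul, Complex.conj_ofReal] at h2
  simp only [map_mul, map_add, map_neg, Complex.conj_ofReal]
  rw [h1, h2]
  push_cast
  ring

lemma vel_bound (h : Par a b r) (k : ℝ) : |vel a k| ≤ a / b := by
  unfold vel
  rw [abs_div, abs_of_pos (so_pos h k), abs_mul, abs_of_pos h.apos]
  apply div_le_div₀ h.apos.le _ h.bpos (so_ge h k)
  have := Real.abs_sin_le_one k
  nlinarith [h.apos]

lemma pp_bound (h : Par a b r) (k : ℝ) : ‖pp a r k‖ ^ 2 + ‖qq a r k‖ ^ 2 = 1 + r ^ 2 := by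
  have := pq2 h k
  simp only [Complex.conj_mul'] at this
  exact_mod_cast this

lemma mh_bound (h : Par a b r) (k : ℝ) : ‖mh r k‖ ^ 2 * (1 + r ^ 2) = (1 + (r ^ 2)⁻¹) * vel a k ^ 2 := by
  have := mh_sq h k
  simp only [Complex.conj_mul'] at this
  exact_mod_cast this

lemma GG_bound (h : Par a b r) : ∃ K, ∀ t ξ k, ‖GG a r t ξ k‖ ≤ K := by
  have hr := h.hr
  obtain ⟨M, hM⟩ : ∃ M, ∀ k, ‖mh r k‖ ≤ M := by
    refine ⟨Real.sqrt ((1 + (r ^ 2)⁻¹) * (a / b) ^ 2), fun k => ?_⟩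
    apply Real.le_sqrt_of_sq_le
    have h1 := mh_bound h k
    have h2 : vel a k ^ 2 ≤ (a / b) ^ 2 := sq_le_sq' (neg_le_of_abs_le (vel_bound h k))
      (le_of_abs_le (vel_bound h k))
    calc ‖mh r k‖ ^ 2 ≤ ‖mh r k‖ ^ 2 * (1 + r ^ 2) := by nlinarith [sq_nonneg ‖mh r k‖, sq_nonneg r, mul_nonneg (sq_nonneg ‖mh r k‖) (sq_nonneg r)]
      _ = _ := h1
      _ ≤ _ := by gcongr
  have hM0 : 0 ≤ M := (norm_nonneg _).trans (hM 0)
  have hp : ∀ k, ‖pp a r k‖ ≤ 1 + r := fun k => by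
    have := pp_bound h k
    apply le_of_sq_le_sq _ (by positivity)
    nlinarith [sq_nonneg ‖qq a r k‖]
  have hq : ∀ k, ‖qq a r k‖ ≤ 1 + r := fun k => by
    have := pp_bound h k
    apply le_of_sq_le_sq _ (by positivity)
    nlinarith [sq_nonneg ‖pp a r k‖]
  have hA : ∀ t k, ‖AA a r t k‖ ≤ M * (1 + (1 + r)) := fun t k => by
    unfold AA
    rw [norm_mul]
    apply mul_le_mul (hM k) _ (norm_nonneg _) hM0
    refine (norm_add_le _ _).trans (add_le_add ?_ ?_)
    · rw [Complex.norm_real]; exact Real.abs_cos_le_one _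
    · rw [norm_mul, Complex.norm_real]
      exact (mul_le_mul (hp k) (Real.abs_sin_le_one _) (abs_nonneg _) (by positivity)).trans (by simp)
  have hB : ∀ t k, ‖BB a r t k‖ ≤ M * (r + (1 + r)) := fun t k => by
    unfold BB
    rw [norm_mul]
    apply mul_le_mul (hM k) _ (norm_nonneg _) hM0
    refine (norm_add_le _ _).trans (add_le_add ?_ ?_)
    · rw [norm_mul, norm_neg, Complex.norm_real, Complex.norm_real, Real.norm_of_nonneg (by positivity)]
      exact (mul_le_mul_of_nonneg_left (Real.abs_cos_le_one _) (by positivity)).trans (by simp)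
    · rw [norm_mul, Complex.norm_real]
      exact (mul_le_mul (hq k) (Real.abs_sin_le_one _) (abs_nonneg _) (by positivity)).trans (by simp)
  refine ⟨M * (1 + (1 + r)) * (M * (1 + (1 + r))) + M * (r + (1 + r)) * (M * (r + (1 + r))), fun t ξ k => ?_⟩
  unfold GG
  refine (norm_add_le _ _).trans (add_le_add ?_ ?_)
  · rw [norm_mul, RCLike.norm_conj]
    exact mul_le_mul (hA _ _) (hA _ _) (norm_nonneg _) (by positivity)
  · rw [norm_mul, RCLike.norm_conj]
    exact mul_le_mul (hB _ _) (hB _ _) (norm_nonneg _) (by positivity)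

lemma phase_tendsto (h : Par a b r) (ξ k : ℝ) :
    Tendsto (fun t : ℕ => (t : ℝ) * om a (k + ξ / t) - t * om a k) atTop (𝓝 (ξ * vel a k)) := by
  by_cases hξ : ξ = 0
  · subst hξ; simp
  have h1 := hasDerivAt_iff_tendsto_slope_zero.1 (om_deriv h k)
  have h2 : Tendsto (fun t : ℕ => ξ / (t : ℝ)) atTop (𝓝[≠] 0) := by
    rw [tendsto_nhdsWithin_iff]
    refine ⟨tendsto_const_div_atTop_nhds_zero_nat ξ, ?_⟩
    filter_upwards [eventually_gt_atTop 0] with t ht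
    have : (t : ℝ) ≠ 0 := by positivity
    simp [hξ]; omega
  have h3 := (h1.comp h2).const_mul ξ
  refine h3.congr' ?_
  filter_upwards [eventually_gt_atTop 0] with t ht
  have : (t : ℝ) ≠ 0 := by positivity
  simp only [Function.comp, smul_eq_mul]
  field_simp

lemma GG_tendsto (h : Par a b r) (ξ k : ℝ) :
    Tendsto (fun t : ℕ => GG a r t (ξ / t) k) atTop
      (𝓝 (((1 + (r ^ 2)⁻¹) * vel a k ^ 2 * Real.cos (ξ * vel a k) : ℝ) : ℂ)) := by
  have hk : Tendsto (fun t : ℕ => k + ξ / (t : ℝ)) atTop (𝓝 k) := by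
    simpa using (tendsto_const_div_atTop_nhds_zero_nat ξ).const_add k
  have hm := ((mh_cont h).tendsto k).comp hk
  have hp := ((pp_cont h).tendsto k).comp hk
  have hq := ((qq_cont h).tendsto k).comp hk
  have hc : Tendsto (fun t : ℕ => ((Real.cos ((t : ℝ) * om a (k + ξ / t) - t * om a k) : ℝ) : ℂ)) atTop
      (𝓝 ((Real.cos (ξ * vel a k) : ℝ) : ℂ)) :=
    ((Complex.continuous_ofReal.comp Real.continuous_cos).tendsto _).comp (phase_tendsto h ξ k)
  have hz : Tendsto (fun t : ℕ => ((starRingEnd ℂ) (pp a r k) * pp a r (k + ξ / t) +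
      (starRingEnd ℂ) (qq a r k) * qq a r (k + ξ / t) - (1 + r ^ 2)) *
      ((Real.sin (t * om a k) * Real.sin (t * om a (k + ξ / t)) : ℝ) : ℂ)) atTop (𝓝 0) := by
    apply Tendsto.zero_mul_isBoundedUnder_le
    · have := ((hp.const_mul ((starRingEnd ℂ) (pp a r k))).add
        (hq.const_mul ((starRingEnd ℂ) (qq a r k)))).sub_const (1 + (r : ℂ) ^ 2)
      rw [pq2 h k, sub_self] at this
      exact this
    · refine isBoundedUnder_of ⟨1, fun t => ?_⟩
      simp only [Function.comp, Complex.norm_real, norm_mul]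
      exact mul_le_one₀ (Real.abs_sin_le_one _) (norm_nonneg _) (Real.abs_sin_le_one _)
  have := (hm.const_mul ((starRingEnd ℂ) (mh r k))).mul
    ((hc.const_mul (1 + (r : ℂ) ^ 2)).add hz)
  rw [add_zero] at this
  convert! this using 1
  · funext t
    rw [GG_formula h]; rfl
  · congr 1
    rw [← mul_assoc, mh_sq h k]
    push_cast; ring

lemma char_tendsto (h : Par a b r) (ξ : ℝ) :
    Tendsto (fun t : ℕ => ∑' x : ℤ, (QQ a b r t x : ℂ) * Complex.exp (Complex.I * (ξ / t : ℝ) * x))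
      atTop (𝓝 ((2 * (Real.pi : ℂ))⁻¹ * ∫ k in (-Real.pi)..Real.pi,
        (((1 + (r ^ 2)⁻¹) * vel a k ^ 2 * Real.cos (ξ * vel a k) : ℝ) : ℂ))) := by
  obtain ⟨K, hK⟩ := GG_bound h
  simp only [(QQ_char h _ _).tsum_eq]
  apply Tendsto.const_mul
  apply intervalIntegral.tendsto_integral_filter_of_dominated_convergence (fun _ => K)
  · exact Eventually.of_forall fun t => (GG_cont h t _).aestronglyMeasurable
  · exact Eventually.of_forall fun t => Eventually.of_forall fun k _ => hK _ _ _
  · simp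
  · exact Eventually.of_forall fun k _ => GG_tendsto h ξ k

end


section

lemma pmf_int (Q : ℤ → ℝ) (hQ0 : ∀ x, 0 ≤ Q x) (hQ1 : HasSum Q 1) (t : ℕ) :
    ∃ μ : ProbabilityMeasure ℝ, (∀ φ : ℝ → ℂ, Continuous φ → (∃ M, ∀ x, ‖φ x‖ ≤ M) →
      ∫ y, φ y ∂(μ : Measure ℝ) = ∑' x : ℤ, (Q x : ℂ) * φ ((x : ℝ) / t)) ∧
      (∀ φ : ℝ → ℝ, Continuous φ → (∃ M, ∀ x, ‖φ x‖ ≤ M) →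
      ∫ y, φ y ∂(μ : Measure ℝ) = ∑' x : ℤ, Q x * φ ((x : ℝ) / t)) := by
  have hs : HasSum (fun x => ENNReal.ofReal (Q x)) 1 := by
    have h1 : ∑' x, ENNReal.ofReal (Q x) = 1 := by
      rw [← ENNReal.ofReal_tsum_of_nonneg hQ0 hQ1.summable, hQ1.tsum_eq, ENNReal.ofReal_one]
    rw [← h1]; exact ENNReal.summable.hasSum
  let p : PMF ℤ := ⟨fun x => ENNReal.ofReal (Q x), hs⟩
  have hp : ∀ x, (p x).toReal = Q x := fun x => ENNReal.toReal_ofReal (hQ0 x)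
  have hm : Measurable (fun x : ℤ => (x : ℝ) / t) := measurable_from_top
  haveI : IsProbabilityMeasure p.toMeasure := PMF.toMeasure.isProbabilityMeasure p
  haveI : IsProbabilityMeasure (p.toMeasure.map (fun x : ℤ => (x : ℝ) / t)) :=
    Measure.isProbabilityMeasure_map hm.aemeasurable
  refine ⟨⟨p.toMeasure.map (fun x : ℤ => (x : ℝ) / t), inferInstance⟩, ?_, ?_⟩
  · rintro φ hφ ⟨M, hM⟩
    rw [ProbabilityMeasure.coe_mk, integral_map hm.aemeasurable hφ.aestronglyMeasurable,
      PMF.integral_eq_tsum]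
    · apply tsum_congr; intro x; rw [hp]; simp
    · exact Integrable.of_bound (hφ.measurable.comp hm).aestronglyMeasurable M
        (Eventually.of_forall fun x => hM _)
  · rintro φ hφ ⟨M, hM⟩
    rw [ProbabilityMeasure.coe_mk, integral_map hm.aemeasurable hφ.aestronglyMeasurable,
      PMF.integral_eq_tsum]
    · apply tsum_congr; intro x; rw [hp]; simp
    · exact Integrable.of_bound (hφ.measurable.comp hm).aestronglyMeasurable M
        (Eventually.of_forall fun x => hM _)

lemma lim_meas (w v : ℝ → ℝ) (hw : Continuous w) (hw0 : ∀ k, 0 ≤ w k) (hv : Continuous v)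
    (hw1 : ∫ k in (-Real.pi)..Real.pi, w k = 1) :
    ∃ μ : ProbabilityMeasure ℝ, (∀ φ : ℝ → ℂ, Continuous φ →
      ∫ y, φ y ∂(μ : Measure ℝ) = ∫ k in (-Real.pi)..Real.pi, (w k : ℂ) * φ (v k)) ∧
      (∀ φ : ℝ → ℝ, Continuous φ →
      ∫ y, φ y ∂(μ : Measure ℝ) = ∫ k in (-Real.pi)..Real.pi, w k * φ (v k)) := by
  have hle : -Real.pi ≤ Real.pi := by linarith [Real.pi_pos]
  have hmw : Measurable (fun k => ENNReal.ofReal (w k)) := hw.measurable.ennreal_ofReal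
  let m := (volume.restrict (Set.Ioc (-Real.pi) Real.pi)).withDensity (fun k => ENNReal.ofReal (w k))
  haveI : IsProbabilityMeasure m := by
    constructor
    simp only [m]
    rw [withDensity_apply _ MeasurableSet.univ, Measure.restrict_univ,
      ← ofReal_integral_eq_lintegral_ofReal, ← intervalIntegral.integral_of_le hle, hw1,
      ENNReal.ofReal_one]
    · exact (hw.integrableOn_Icc).mono_set Set.Ioc_subset_Icc_self
    · exact Eventually.of_forall hw0
  haveI : IsProbabilityMeasure (m.map v) := Measure.isProbabilityMeasure_map hv.aemeasurable
  refine ⟨⟨m.map v, inferInstance⟩, ?_, ?_⟩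
  · intro φ hφ
    rw [ProbabilityMeasure.coe_mk, integral_map hv.aemeasurable hφ.aestronglyMeasurable]
    simp only [m]
    rw [integral_withDensity_eq_integral_toReal_smul hmw (Eventually.of_forall fun k => ENNReal.ofReal_lt_top),
      intervalIntegral.integral_of_le hle]
    apply integral_congr_ae; apply Eventually.of_forall; intro k
    simp only [ENNReal.toReal_ofReal (hw0 k), Complex.real_smul]
  · intro φ hφ
    rw [ProbabilityMeasure.coe_mk, integral_map hv.aemeasurable hφ.aestronglyMeasurable]
    simp only [m]
    rw [integral_withDensity_eq_integral_toReal_smul hmw (Eventually.of_forall fun k => ENNReal.ofReal_lt_top),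
      intervalIntegral.integral_of_le hle]
    apply integral_congr_ae; apply Eventually.of_forall; intro k
    simp only [ENNReal.toReal_ofReal (hw0 k), smul_eq_mul]

lemma weak_gen (Q : ℕ → ℤ → ℝ) (hQ0 : ∀ t x, 0 ≤ Q t x) (hQ1 : ∀ t, HasSum (Q t) 1)
    (w v : ℝ → ℝ) (hw : Continuous w) (hw0 : ∀ k, 0 ≤ w k) (hv : Continuous v)
    (hw1 : ∫ k in (-Real.pi)..Real.pi, w k = 1)
    (hch : ∀ ξ : ℝ, Tendsto (fun t : ℕ => ∑' x : ℤ, (Q t x : ℂ) *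
      Complex.exp (Complex.I * (ξ / t : ℝ) * x)) atTop
      (𝓝 (∫ k in (-Real.pi)..Real.pi, (w k : ℂ) * Complex.exp (ξ * v k * Complex.I))))
    (G : ℝ → ℝ) (hG : Continuous G) (hGb : ∃ M, ∀ x, |G x| ≤ M) :
    Tendsto (fun t : ℕ => ∑' x : ℤ, Q t x * G ((x : ℝ) / t)) atTop
      (𝓝 (∫ k in (-Real.pi)..Real.pi, w k * G (v k))) := by
  choose μ hμ1 hμ2 using fun t : ℕ => pmf_int (Q t) (hQ0 t) (hQ1 t) t
  obtain ⟨ν, hν1, hν2⟩ := lim_meas w v hw hw0 hv hw1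
  have ht : Tendsto μ atTop (𝓝 ν) := by
    rw [ProbabilityMeasure.tendsto_iff_tendsto_charFun]
    intro ξ
    have hc : Continuous (fun x : ℝ => Complex.exp (ξ * x * Complex.I)) := by fun_prop
    have hb : ∃ M, ∀ x : ℝ, ‖Complex.exp (ξ * x * Complex.I)‖ ≤ M := ⟨1, fun x => by
      have := Complex.norm_exp_ofReal_mul_I (ξ * x)
      push_cast at this; exact this.le⟩
    simp only [charFun_apply_real]
    rw [hν1 _ hc]
    refine (hch ξ).congr fun t => ?_
    rw [hμ1 t _ hc hb]
    apply tsum_congr; intro x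
    congr 2; push_cast; ring
  rw [ProbabilityMeasure.tendsto_iff_forall_integral_tendsto] at ht
  obtain ⟨M, hM⟩ := hGb
  have := ht (BoundedContinuousFunction.ofNormedAddCommGroup G hG M hM)
  simp only [BoundedContinuousFunction.coe_ofNormedAddCommGroup] at this
  rw [hν2 _ hG] at this
  refine this.congr fun t => ?_
  exact hμ2 t _ hG ⟨M, hM⟩

variable {a b r : ℝ}

lemma vel_neg (k : ℝ) : vel a (-k) = - vel a k := by
  simp [vel, so, neg_div]

lemma vel_mass (h : Par a b r) :
    ∫ k in (-Real.pi)..Real.pi, (1 + (r ^ 2)⁻¹) * vel a k ^ 2 = 2 * Real.pi * (2 * (r ^ 2)⁻¹) := by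
  have h1 := char_tendsto h 0
  have h2 : Tendsto (fun t:ℕ => ∑' x:ℤ, (QQ a b r t x:ℂ) * Complex.exp (Complex.I * ((0:ℝ)/t:ℝ) * x))
      atTop (𝓝 ((2 * (r ^ 2)⁻¹ : ℝ) : ℂ)) := by
    refine tendsto_const_nhds.congr fun t => ?_
    rw [← (QQ_total h t).tsum_eq, Complex.ofReal_tsum]
    apply tsum_congr; intro x; simp
  have h3 := tendsto_nhds_unique h1 h2
  simp only [zero_mul, Real.cos_zero, mul_one] at h3
  rw [intervalIntegral.integral_ofReal] at h3
  have h4 : (2 * Real.pi)⁻¹ * ∫ k in (-Real.pi)..Real.pi, (1 + (r ^ 2)⁻¹) * vel a k ^ 2 = 2 * (r ^ 2)⁻¹ := by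
    exact_mod_cast h3
  have := Real.pi_pos
  rw [← h4]; field_simp

lemma cos_to_exp (h : Par a b r) (c ξ : ℝ) :
    ∫ k in (-Real.pi)..Real.pi, ((c * vel a k ^ 2 * Real.cos (ξ * vel a k) : ℝ) : ℂ) =
    ∫ k in (-Real.pi)..Real.pi, ((c * vel a k ^ 2 : ℝ) : ℂ) * Complex.exp (ξ * vel a k * Complex.I) := by
  have hv := vel_cont h
  have hodd : ∫ k in (-Real.pi)..Real.pi, ((c * vel a k ^ 2 * Real.sin (ξ * vel a k) : ℝ) : ℂ) = 0 := by
    have h1 := intervalIntegral.integral_comp_neg (a := -Real.pi) (b := Real.pi)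
      (fun k => ((c * vel a k ^ 2 * Real.sin (ξ * vel a k) : ℝ) : ℂ))
    simp only [vel_neg, neg_neg, mul_neg, Real.sin_neg, neg_sq, Complex.ofReal_neg,
      intervalIntegral.integral_neg] at h1
    exact self_eq_neg.1 h1.symm
  have h2 : ∀ k : ℝ, ((c * vel a k ^ 2 : ℝ) : ℂ) * Complex.exp (ξ * vel a k * Complex.I) =
    ((c * vel a k ^ 2 * Real.cos (ξ * vel a k) : ℝ) : ℂ) +
    ((c * vel a k ^ 2 * Real.sin (ξ * vel a k) : ℝ) : ℂ) * Complex.I := by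
    intro k
    rw [Complex.exp_mul_I]; push_cast; ring
  simp only [h2]
  rw [intervalIntegral.integral_add, intervalIntegral.integral_mul_const, hodd]
  · simp
  · apply Continuous.intervalIntegrable; fun_prop
  · apply Continuous.intervalIntegrable; fun_prop

lemma QQ_weak (h : Par a b r) (G : ℝ → ℝ) (hG : Continuous G) (hGb : ∃ M, ∀ x, |G x| ≤ M) :
    Tendsto (fun t : ℕ => ∑' x : ℤ, QQ a b r t x * G ((x : ℝ) / t)) atTop
      (𝓝 ((2 * Real.pi)⁻¹ * ∫ k in (-Real.pi)..Real.pi, (1 + (r ^ 2)⁻¹) * vel a k ^ 2 * G (vel a k))) := by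
  have hr := h.hr
  set u := (r ^ 2)⁻¹ with hu
  have hup : 0 < u := by positivity
  have hpi := Real.pi_pos
  set c := (2 * u)⁻¹ with hc
  have hcp : 0 < c := by positivity
  have hv := vel_cont h
  have key := weak_gen (fun t x => c * QQ a b r t x) (fun t x => mul_nonneg hcp.le (QQ_nonneg t x))
    (fun t => by
      have := (QQ_total h t).mul_left c
      rwa [← hu, inv_mul_cancel₀ (by positivity)] at this)
    (fun k => c * (2 * Real.pi)⁻¹ * (1 + u) * vel a k ^ 2) (vel a) (by fun_prop) (fun k => by positivity) hv
    (by
      have := vel_mass h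
      simp only [mul_assoc] at this ⊢
      rw [intervalIntegral.integral_const_mul, intervalIntegral.integral_const_mul, this, ← hu, hc]
      field_simp) ?_ G hG hGb
  · have k2 := key.const_mul (2 * u)
    have e : ∀ z : ℝ, 2 * u * (c * z) = z := fun z => by rw [hc]; field_simp
    have e1 : (2 * u) * ∫ k in (-Real.pi)..Real.pi, c * (2 * Real.pi)⁻¹ * (1 + u) * vel a k ^ 2 * G (vel a k)
        = (2 * Real.pi)⁻¹ * ∫ k in (-Real.pi)..Real.pi, (1 + u) * vel a k ^ 2 * G (vel a k) := by
      simp only [mul_assoc]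
      simp only [intervalIntegral.integral_const_mul]
      rw [← mul_assoc 2 u, e]
    rw [e1] at k2
    refine k2.congr fun t => ?_
    rw [← tsum_mul_left]
    apply tsum_congr; intro x
    rw [mul_assoc c, e]
  · intro ξ
    have k1 := (char_tendsto h ξ).const_mul (c : ℂ)
    rw [cos_to_exp h, ← mul_assoc, ← intervalIntegral.integral_const_mul] at k1
    have e : (fun k : ℝ => (c : ℂ) * (2 * (Real.pi : ℂ))⁻¹ * (((1 + (r ^ 2)⁻¹) * vel a k ^ 2 : ℝ) * Complex.exp (ξ * vel a k * Complex.I)))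
      = fun k => ((c * (2 * Real.pi)⁻¹ * (1 + u) * vel a k ^ 2 : ℝ) : ℂ) * Complex.exp (ξ * vel a k * Complex.I) := by
      funext k; rw [← hu]; push_cast; ring
    rw [e] at k1
    refine k1.congr fun t => ?_
    rw [← tsum_mul_left]
    apply tsum_congr; intro x
    push_cast; ring

end


section
variable {a b r : ℝ}

noncomputable def ff (a r x : ℝ) : ℝ :=
  (r ^ 2 - 1) * x ^ 2 / (Real.pi * (1 - x ^ 2) * Real.sqrt (a ^ 2 - x ^ 2))

lemma vel_deriv (h : Par a b r) (k : ℝ) :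
    HasDerivAt (vel a) (a * Real.cos k * b ^ 2 / so a k ^ 3) k := by
  have hs := so_pos h k
  have hq := so_sq h k
  have h1 : HasDerivAt (so a) (a ^ 2 * Real.cos k * Real.sin k / so a k) k := by
    have h2 : HasDerivAt (fun k => 1 - (a * Real.cos k) ^ 2) (2 * a ^ 2 * Real.cos k * Real.sin k) k := by
      have := (((Real.hasDerivAt_cos k).const_mul a).pow 2).const_sub 1
      refine this.congr_deriv ?_
      simp; ring
    have h3 := h2.sqrt (by rw [← hq]; positivity)
    refine h3.congr_deriv ?_
    change _ / (2 * so a k) = _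
    field_simp
  have h4 := ((Real.hasDerivAt_sin k).const_mul a).div h1 hs.ne'
  refine h4.congr_deriv ?_
  have hsq := h.sq
  have hcs := Real.sin_sq_add_cos_sq k
  field_simp
  rw [hq]
  have e1 : b ^ 2 = 1 - a ^ 2 := by linarith
  have e2 : Real.sin k ^ 2 = 1 - Real.cos k ^ 2 := by linarith
  linear_combination (-a ^ 2 * a * Real.cos k) * e2 - a * Real.cos k * e1

lemma vel_one_sub (h : Par a b r) (k : ℝ) : 1 - vel a k ^ 2 = b ^ 2 / so a k ^ 2 := by
  have hs := so_pos h k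
  have hq := so_sq h k
  have hsq := h.sq
  have hcs := Real.sin_sq_add_cos_sq k
  unfold vel
  field_simp
  linear_combination hq - hsq - a ^ 2 * hcs

lemma vel_a_sub (h : Par a b r) (k : ℝ) :
    a ^ 2 - vel a k ^ 2 = (a * b * Real.cos k / so a k) ^ 2 := by
  have hs := so_pos h k
  have hq := so_sq h k
  have hsq := h.sq
  have hcs := Real.sin_sq_add_cos_sq k
  unfold vel
  field_simp
  rw [hq]
  linear_combination (-a ^ 2 * Real.cos k ^ 2) * hsq - a ^ 2 * hcs

lemma vel_ff (h : Par a b r) (k : ℝ) (hc : 0 < Real.cos k) :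
    a * Real.cos k * b ^ 2 / so a k ^ 3 * ff a r (vel a k) = (1 + r ^ 2) / Real.pi * vel a k ^ 2 := by
  have hs := so_pos h k
  have hb := h.bpos
  have ha := h.apos
  have hr := h.hr
  have hpi := Real.pi_pos
  unfold ff
  rw [vel_one_sub h, vel_a_sub h, Real.sqrt_sq (by positivity)]
  have e : r ^ 2 - 1 = b * (1 + r ^ 2) := by rw [h.hb]; field_simp
  rw [e]
  field_simp

lemma vel_mono (h : Par a b r) : StrictMonoOn (vel a) (Set.Icc 0 (Real.pi / 2)) := by
  apply strictMonoOn_of_deriv_pos (convex_Icc _ _) (vel_cont h).continuousOn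
  intro k hk
  rw [interior_Icc] at hk
  rw [(vel_deriv h k).deriv]
  have := Real.cos_pos_of_mem_Ioo ⟨by linarith [hk.1, Real.pi_pos], hk.2⟩
  have hs := so_pos h k
  have hb := h.bpos
  have ha := h.apos
  positivity

lemma vel_zero : vel a 0 = 0 := by simp [vel]
lemma vel_half : vel a (Real.pi / 2) = a := by simp [vel, so]
lemma vel_pi_sub (k : ℝ) : vel a (Real.pi - k) = vel a k := by simp [vel, so]

lemma vel_image (h : Par a b r) : vel a '' Set.Ioo 0 (Real.pi / 2) = Set.Ioo 0 a := by
  have hp : (0:ℝ) ≤ Real.pi / 2 := by positivity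
  apply Set.Subset.antisymm
  · rintro _ ⟨k, hk, rfl⟩
    constructor
    · have := vel_mono h (Set.left_mem_Icc.2 hp) (Set.Ioo_subset_Icc_self hk) hk.1
      rwa [vel_zero] at this
    · have := vel_mono h (Set.Ioo_subset_Icc_self hk) (Set.right_mem_Icc.2 hp) hk.2
      rwa [vel_half] at this
  · have := intermediate_value_Ioo hp (vel_cont h).continuousOn
    rwa [vel_zero, vel_half] at this

lemma cov_integrable (h : Par a b r) (φ : ℝ → ℝ) (hφ : Continuous φ) :
    IntegrableOn (fun x => φ x * ff a r x) (Set.Ico 0 a) := by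
  rw [integrableOn_Ico_iff_integrableOn_Ioo, ← vel_image h,
    integrableOn_image_iff_integrableOn_abs_deriv_smul measurableSet_Ioo
      (fun k _ => (vel_deriv h k).hasDerivWithinAt)
      ((vel_mono h).injOn.mono Set.Ioo_subset_Icc_self)]
  have hv := vel_cont h
  have : IntegrableOn (fun k => φ (vel a k) * ((1 + r ^ 2) / Real.pi * vel a k ^ 2)) (Set.Ioo 0 (Real.pi / 2)) := by
    have hc : Continuous (fun k => φ (vel a k) * ((1 + r ^ 2) / Real.pi * vel a k ^ 2)) := by fun_prop
    exact hc.integrableOn_Icc.mono_set Set.Ioo_subset_Icc_self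
  refine this.congr_fun ?_ measurableSet_Ioo
  intro k hk
  have hc := Real.cos_pos_of_mem_Ioo ⟨by linarith [hk.1, Real.pi_pos], hk.2⟩
  have hs := so_pos h k
  have hb := h.bpos
  have ha := h.apos
  simp only [smul_eq_mul]
  rw [abs_of_pos (by positivity), ← vel_ff h k hc]
  ring

lemma cov (h : Par a b r) (φ : ℝ → ℝ) :
    ∫ x in Set.Ico 0 a, φ x * ff a r x =
    (1 + r ^ 2) / Real.pi * ∫ k in (0:ℝ)..(Real.pi / 2), vel a k ^ 2 * φ (vel a k) := by
  have hp : (0:ℝ) ≤ Real.pi / 2 := by positivity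
  rw [integral_Ico_eq_integral_Ioo, ← vel_image h,
    integral_image_eq_integral_abs_deriv_smul measurableSet_Ioo
      (fun k _ => (vel_deriv h k).hasDerivWithinAt)
      ((vel_mono h).injOn.mono Set.Ioo_subset_Icc_self),
    intervalIntegral.integral_of_le hp, integral_Ioc_eq_integral_Ioo, ← integral_const_mul]
  apply setIntegral_congr_fun measurableSet_Ioo
  intro k hk
  have hc := Real.cos_pos_of_mem_Ioo ⟨by linarith [hk.1, Real.pi_pos], hk.2⟩
  have hs := so_pos h k
  have hb := h.bpos
  have ha := h.apos
  simp only [smul_eq_mul]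
  rw [abs_of_pos (by positivity)]
  linear_combination φ (vel a k) * vel_ff h k hc

lemma half_int (h : Par a b r) (F : ℝ → ℝ) (hF : Continuous F) :
    ∫ k in (0:ℝ)..Real.pi, F (vel a k) = 2 * ∫ k in (0:ℝ)..(Real.pi / 2), F (vel a k) := by
  have hc : Continuous (fun k => F (vel a k)) := hF.comp (vel_cont h)
  rw [← intervalIntegral.integral_add_adjacent_intervals (b := Real.pi / 2)
    (hc.intervalIntegrable _ _) (hc.intervalIntegrable _ _)]
  have := intervalIntegral.integral_comp_sub_left (a := 0) (b := Real.pi / 2) (fun k => F (vel a k)) Real.pi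
  simp only [vel_pi_sub] at this
  rw [sub_zero, sub_half] at this
  rw [← this]; ring

lemma neg_int (F : ℝ → ℝ) :
    ∫ k in (-Real.pi)..0, F (vel a k) = ∫ k in (0:ℝ)..Real.pi, F (- vel a k) := by
  have := intervalIntegral.integral_comp_neg (a := 0) (b := Real.pi) (fun k => F (vel a k))
  simp only [vel_neg, neg_zero] at this
  exact this.symm

lemma full_int (h : Par a b r) (F : ℝ → ℝ) (hF : Continuous F) :
    ∫ k in (-Real.pi)..Real.pi, F (vel a k) =
    2 * (∫ k in (0:ℝ)..(Real.pi / 2), F (- vel a k)) + 2 * ∫ k in (0:ℝ)..(Real.pi / 2), F (vel a k) := by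
  have hc : Continuous (fun k => F (vel a k)) := hF.comp (vel_cont h)
  rw [← intervalIntegral.integral_add_adjacent_intervals (b := 0)
    (hc.intervalIntegrable _ _) (hc.intervalIntegrable _ _), neg_int, half_int h F hF,
    half_int h (fun x => F (-x)) (by fun_prop)]

lemma ff_total (h : Par a b r) : ∫ x in Set.Ico 0 a, ff a r x = 1 := by
  have h1 := cov h (fun _ => 1)
  simp only [one_mul, mul_one] at h1
  rw [h1]
  have h2 := vel_mass h
  rw [intervalIntegral.integral_const_mul, full_int h (fun x => x ^ 2) (by fun_prop)] at h2
  simp only [neg_sq] at h2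
  have hr := h.hr
  have hpi := Real.pi_pos
  have hr0 : r ≠ 0 := by positivity
  field_simp at h2 ⊢
  linarith

lemma lim_final (h : Par a b r) (G : ℝ → ℝ) (hG : Continuous G) (hG0 : ∀ x ≤ 0, G x = 0) :
    (2 * Real.pi)⁻¹ * ∫ k in (-Real.pi)..Real.pi, (1 + (r ^ 2)⁻¹) * vel a k ^ 2 * G (vel a k) =
    (r ^ 2)⁻¹ * ∫ x in Set.Ico 0 a, G x * ff a r x := by
  rw [cov h G, full_int h (fun x => (1 + (r ^ 2)⁻¹) * x ^ 2 * G x) (by fun_prop)]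
  have hp : (0:ℝ) ≤ Real.pi / 2 := by positivity
  have : ∫ k in (0:ℝ)..(Real.pi / 2), (1 + (r ^ 2)⁻¹) * (-vel a k) ^ 2 * G (-vel a k) = 0 := by
    apply intervalIntegral.integral_zero_ae
    apply Eventually.of_forall
    intro k hk
    rw [Set.uIoc_of_le hp] at hk
    have := (vel_mono h).monotoneOn (Set.left_mem_Icc.2 hp) (Set.Ioc_subset_Icc_self hk) hk.1.le
    rw [vel_zero] at this
    rw [hG0 _ (by linarith), mul_zero]
  rw [this]
  simp only [mul_assoc]
  rw [intervalIntegral.integral_const_mul]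
  have hr := h.hr
  have hpi := Real.pi_pos
  have hr0 : r ≠ 0 := by positivity
  field_simp
  ring
end


section
variable {a b r : ℝ}

lemma wloc_bd (hr : 1 < r) (t x : ℕ) : 0 ≤ wloc r t x ∧ wloc r t x ≤ (r⁻¹) ^ x ∧ wloc r t x ≤ 1 := by
  have h0 : 0 < r := by linarith
  have h1 : (r ^ 2)⁻¹ ≤ 1 := inv_le_one_of_one_le₀ (by nlinarith)
  have h2 : 0 < (r ^ 2)⁻¹ := by positivity
  have h3 : 0 < (r⁻¹) ^ x := by positivity
  have h4 : (r⁻¹) ^ x ≤ 1 := pow_le_one₀ (by positivity) (inv_le_one_of_one_le₀ hr.le)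
  unfold wloc
  split_ifs
  · refine ⟨mul_nonneg (by linarith) h3.le, ?_, ?_⟩ <;> nlinarith
  · exact ⟨le_rfl, h3.le, zero_le_one⟩

lemma wphi_bd (h : Par a b r) (t : ℕ) (x : ℤ) : |(wphi a b r t x).1| ≤ 2 ∧ |(wphi a b r t x).2| ≤ 2 := by
  have h1 : (r ^ 2)⁻¹ ≤ 1 := inv_le_one_of_one_le₀ (by nlinarith [h.hr])
  have h2 : QQ a b r t x ≤ 2 * (r ^ 2)⁻¹ :=
    le_hasSum (QQ_total h t) x (fun y _ => QQ_nonneg t y)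
  unfold QQ at h2
  constructor <;> apply abs_le_of_sq_le_sq _ (by norm_num) <;>
    nlinarith [sq_nonneg (wphi a b r t x).1, sq_nonneg (wphi a b r t x).2]

lemma prob_QQ (h : Par a b r) (t x : ℕ) : |prob a b (-1) t (x + 1) - QQ a b r t ((x + 1 : ℕ) : ℤ)| ≤
    ((1 + r ^ 2) + 4 * (1 + r)) * (r⁻¹) ^ (x + 1) := by
  have hr := h.hr
  obtain ⟨hd1, hd2⟩ := psi_decomp h t
  obtain ⟨w0, w1, w2⟩ := wloc_bd hr t (x + 1)
  obtain ⟨l1, l2⟩ := wphi_bd h t ((x + 1 : ℕ) : ℤ)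
  unfold prob QQ
  rw [hd1 (x + 1), hd2 x, Complex.norm_real, Complex.norm_real]
  simp only [Real.norm_eq_abs, sq_abs]
  set w := wloc r t (x + 1)
  set L := (wphi a b r t ((x + 1 : ℕ) : ℤ)).1
  set R := (wphi a b r t ((x + 1 : ℕ) : ℤ)).2
  have e : (w + L) ^ 2 + (-r * w + R) ^ 2 - (L ^ 2 + R ^ 2) = w * ((1 + r ^ 2) * w + 2 * (L - r * R)) := by ring
  rw [e, abs_mul, abs_of_nonneg w0, mul_comm]
  have h5 : |(1 + r ^ 2) * w + 2 * (L - r * R)| ≤ (1 + r ^ 2) + 4 * (1 + r) := by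
    rw [abs_le] at l1 l2 ⊢
    constructor <;> nlinarith
  exact mul_le_mul h5 w1 w0 (by positivity)

lemma caseB_zero (h : Par a b r) (g : ℝ → ℝ) (hg : Continuous g) (hgb : ∃ M, ∀ x, |g x| ≤ M)
    (g0 : g 0 = 0) :
    Tendsto (fun t : ℕ => ∑' x : ℕ, prob a b (-1) t x * g ((x : ℝ) / (t : ℝ)))
      atTop (𝓝 ((r ^ 2)⁻¹ * ∫ x in Set.Ico (0 : ℝ) a, g x * ff a r x)) := by
  have hr := h.hr
  obtain ⟨M, hM⟩ := hgb
  have hM0 : 0 ≤ M := (abs_nonneg _).trans (hM 0)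
  set G : ℝ → ℝ := fun x => g (max x 0) with hG
  have hGc : Continuous G := by rw [hG]; fun_prop
  have hGn : ∀ x ≤ 0, G x = 0 := fun x hx => by simp [hG, max_eq_right hx, g0]
  have hGp : ∀ x, 0 ≤ x → G x = g x := fun x hx => by simp [hG, max_eq_left hx]
  have main := QQ_weak h G hGc ⟨M, fun x => hM _⟩
  rw [lim_final h G hGc hGn] at main
  have e1 : ∫ x in Set.Ico (0 : ℝ) a, G x * ff a r x = ∫ x in Set.Ico (0 : ℝ) a, g x * ff a r x := by
    apply setIntegral_congr_fun measurableSet_Ico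
    intro x hx
    simp only [hGp x hx.1]
  rw [e1] at main
  have e2 : ∀ t : ℕ, ∑' x : ℤ, QQ a b r t x * G ((x : ℝ) / t) =
      ∑' x : ℕ, QQ a b r t (x : ℤ) * g ((x : ℝ) / t) := by
    intro t
    rw [← Function.Injective.tsum_eq (g := fun n : ℕ => (n : ℤ)) Nat.cast_injective]
    · apply tsum_congr; intro x
      rw [Int.cast_natCast, hGp _ (by positivity)]
    · intro x hx
      rw [Function.mem_support] at hx
      by_contra hc
      have hx0 : x < 0 := by
        by_contra h0
        exact hc ⟨x.toNat, Int.toNat_of_nonneg (not_lt.1 h0)⟩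
      apply hx
      rw [hGn, mul_zero]
      apply div_nonpos_of_nonpos_of_nonneg _ (Nat.cast_nonneg t)
      exact_mod_cast hx0.le
  simp only [e2] at main
  set C := (1 + r ^ 2) + 4 * (1 + r) with hC
  have hC0 : 0 ≤ C := by positivity
  have hE : ∀ t x : ℕ, |(prob a b (-1) t x - QQ a b r t (x : ℤ)) * g ((x : ℝ) / t)| ≤
      C * (r⁻¹) ^ x * |g ((x : ℝ) / t)| := by
    intro t x
    cases x with
    | zero => simp [g0]
    | succ x =>
      rw [abs_mul]
      exact mul_le_mul_of_nonneg_right (prob_QQ h t x) (abs_nonneg _)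
  have hgeo : Summable (fun x : ℕ => C * (r⁻¹) ^ x * M) :=
    ((summable_geometric_of_lt_one (by positivity) (inv_lt_one_of_one_lt₀ hr)).mul_left C).mul_right M
  have hEM : ∀ t x : ℕ, ‖(prob a b (-1) t x - QQ a b r t (x : ℤ)) * g ((x : ℝ) / t)‖ ≤
      C * (r⁻¹) ^ x * M := fun t x =>
    (hE t x).trans (mul_le_mul_of_nonneg_left (hM _) (by positivity))
  have herr : Tendsto (fun t : ℕ => ∑' x : ℕ, (prob a b (-1) t x - QQ a b r t (x : ℤ)) * g ((x : ℝ) / t))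
      atTop (𝓝 (∑' _ : ℕ, (0 : ℝ))) := by
    apply tendsto_tsum_of_dominated_convergence hgeo
    · intro x
      have h1 : Tendsto (fun t : ℕ => C * (r⁻¹) ^ x * |g ((x : ℝ) / t)|) atTop (𝓝 (C * (r⁻¹) ^ x * |g 0|)) := by
        apply Tendsto.const_mul
        apply Tendsto.abs
        exact (hg.tendsto 0).comp (tendsto_const_div_atTop_nhds_zero_nat _)
      rw [g0, abs_zero, mul_zero] at h1
      exact squeeze_zero_norm (fun t => hE t x) h1
    · exact Eventually.of_forall fun t x => hEM t x
  rw [tsum_zero] at herr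
  have := herr.add main
  rw [zero_add] at this
  refine this.congr fun t => ?_
  rw [← Summable.tsum_add]
  · apply tsum_congr; intro x; ring
  · exact Summable.of_norm_bounded hgeo (hEM t)
  · have s1 : Summable (fun x : ℕ => QQ a b r t (x : ℤ) * M) :=
      ((QQ_total h t).summable.comp_injective Nat.cast_injective).mul_right M
    apply Summable.of_norm_bounded s1
    intro x
    rw [norm_mul, Real.norm_of_nonneg (QQ_nonneg t _)]
    exact mul_le_mul_of_nonneg_left (hM _) (QQ_nonneg t _)

lemma caseB_par (h : Par a b r) (g : ℝ → ℝ) (hg : Continuous g) (hgb : ∃ M, ∀ x, |g x| ≤ M) :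
    Tendsto (fun t : ℕ => ∑' x : ℕ, prob a b (-1) t x * g ((x : ℝ) / (t : ℝ)))
      atTop (𝓝 ((1 - (r ^ 2)⁻¹) * g 0 + (r ^ 2)⁻¹ * ∫ x in Set.Ico (0 : ℝ) a, g x * ff a r x)) := by
  have hz := caseB_zero h (fun x => g x - g 0) (by fun_prop) (by
    obtain ⟨M, hM⟩ := hgb
    exact ⟨M + |g 0|, fun x => (abs_sub _ _).trans (by linarith [hM x])⟩) (by simp)
  have e1 : ∫ x in Set.Ico (0 : ℝ) a, (g x - g 0) * ff a r x =
      (∫ x in Set.Ico (0 : ℝ) a, g x * ff a r x) - g 0 := by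
    simp only [sub_mul]
    rw [integral_sub (cov_integrable h g hg) (cov_integrable h (fun _ => g 0) continuous_const),
      integral_const_mul, ff_total h, mul_one]
  rw [e1] at hz
  have := hz.add_const (g 0)
  have e2 : (r ^ 2)⁻¹ * ((∫ x in Set.Ico (0 : ℝ) a, g x * ff a r x) - g 0) + g 0 =
    (1 - (r ^ 2)⁻¹) * g 0 + (r ^ 2)⁻¹ * ∫ x in Set.Ico (0 : ℝ) a, g x * ff a r x := by ring
  rw [e2] at this
  refine this.congr fun t => ?_
  have s0 : Summable (fun x => prob a b (-1) t x * g 0) := prob_summable a b (-1) t (fun _ => g 0)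
  have s1 : Summable (fun x : ℕ => prob a b (-1) t x * (g ((x : ℝ) / t) - g 0)) :=
    prob_summable a b (-1) t (fun x => g ((x : ℝ) / t) - g 0)
  have e3 : g 0 = ∑' x, prob a b (-1) t x * g 0 := by
    rw [tsum_mul_right, prob_total h t, one_mul]
  nth_rw 2 [e3]
  rw [← s1.tsum_add s0]
  apply tsum_congr; intro x; ring
end

/-- Weak convergence theorem, Case (B): with `s = −1`, `X_t/t` converges
weakly to `((κ−2)/(κ−1))·δ_0 + (1/(κ−1))·f_κ(x)dx`: for every bounded continuous
`g : ℝ → ℝ`,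
`lim_{t→∞} ∑_{x∈ℤ₊} P(X_t = x)·g(x/t) = ((κ−2)/(κ−1))·g(0) + (1/(κ−1))·∫_0^a g(x)·f_κ(x) dx`. -/
theorem half_line_caseB_weak_convergence
    (κ : ℕ) (hκ : 3 ≤ κ) (a b : ℝ)
    (ha : a = 2 * Real.sqrt ((κ : ℝ) - 1) / κ) (hb : b = ((κ : ℝ) - 2) / κ)
    (f : ℝ → ℝ)
    (hf : ∀ x : ℝ, f x = if 0 ≤ x ∧ x < a then
      ((κ : ℝ) - 2) * x ^ 2 / (Real.pi * (1 - x ^ 2) * Real.sqrt (a ^ 2 - x ^ 2)) else 0)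
    (g : ℝ → ℝ) (hg : Continuous g) (hgbd : ∃ M : ℝ, ∀ x : ℝ, |g x| ≤ M) :
    Tendsto (fun t : ℕ => ∑' x : ℕ, prob a b (-1) t x * g ((x : ℝ) / (t : ℝ)))
      atTop (𝓝 ((((κ : ℝ) - 2) / ((κ : ℝ) - 1)) * g 0
        + (1 / ((κ : ℝ) - 1)) * ∫ x in Set.Ico (0 : ℝ) a, g x * f x)) := by
  have hκ' : (3 : ℝ) ≤ κ := by exact_mod_cast hκ
  have hr2 : Real.sqrt ((κ : ℝ) - 1) ^ 2 = κ - 1 := Real.sq_sqrt (by linarith)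
  have hr1 : 1 < Real.sqrt ((κ : ℝ) - 1) := by
    rw [Real.lt_sqrt (by norm_num)]; linarith
  have hP : Par a b (Real.sqrt ((κ : ℝ) - 1)) := by
    refine ⟨hr1, ?_, ?_⟩
    · rw [hr2, ha]; congr 1; ring
    · rw [hr2, hb]; congr 1 <;> ring
  have key := caseB_par hP g hg hgbd
  have e1 : ∫ x in Set.Ico (0 : ℝ) a, g x * ff a (Real.sqrt ((κ : ℝ) - 1)) x =
      ∫ x in Set.Ico (0 : ℝ) a, g x * f x := by
    apply setIntegral_congr_fun measurableSet_Ico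
    intro x hx
    simp only [hf x, ff]
    rw [if_pos ⟨hx.1, hx.2⟩, hr2]
    ring_nf
  rw [e1, hr2] at key
  have h1 : (κ : ℝ) - 1 ≠ 0 := by linarith
  have e2 : 1 - ((κ : ℝ) - 1)⁻¹ = ((κ : ℝ) - 2) / ((κ : ℝ) - 1) := by field_simp; ring
  rw [e2] at key
  rwa [one_div]


end
end

section
/- Generating function of the left-moving amplitude away from the wall: for every sign s ∈ {+1, −1}, every x ≥ 1 and every real z with 0 < z < 1, the (absolutely convergent) series Σ_{t=0}^∞ Ψ_t^L(x)·z^t equals m·λ(z)^{x−1}·(a·z − λ(z))·ν(z)/(z²−1). -/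
noncomputable section

lemma psi_zero (a b s : ℝ) (x : ℕ) : psi a b s 0 x = if x = 0 then (1, 0) else (0, 0) := by
  rw [psi]

lemma psi_succ_fst (a b s : ℝ) (t x : ℕ) : (psi a b s (t + 1) x).1 =
    (a : ℂ) * (psi a b s t (x + 1)).1 - (b : ℂ) * (psi a b s t (x + 1)).2 := by
  rw [psi]

lemma psi_succ_snd_zero (a b s : ℝ) (t : ℕ) : (psi a b s (t + 1) 0).2 = 0 := by
  rw [psi]; simp

lemma psi_succ_snd_one (a b s : ℝ) (t : ℕ) :
    (psi a b s (t + 1) 1).2 = (s : ℂ) * (psi a b s t 0).1 := by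
  rw [psi]; simp

lemma psi_succ_snd (a b s : ℝ) (t x : ℕ) : (psi a b s (t + 1) (x + 2)).2 =
    (b : ℂ) * (psi a b s t (x + 1)).1 + (a : ℂ) * (psi a b s t (x + 1)).2 := by
  rw [psi]; simp

lemma coin_norm (a b : ℝ) (hab : a ^ 2 + b ^ 2 = 1) (u v : ℂ) :
    ‖(a : ℂ) * u - b * v‖ ^ 2 + ‖(b : ℂ) * u + a * v‖ ^ 2 = ‖u‖ ^ 2 + ‖v‖ ^ 2 := by
  simp only [← Complex.normSq_eq_norm_sq, Complex.normSq_apply, Complex.add_re, Complex.sub_re,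
    Complex.add_im, Complex.sub_im, Complex.re_ofReal_mul, Complex.im_ofReal_mul]
  linear_combination (u.re ^ 2 + u.im ^ 2 + v.re ^ 2 + v.im ^ 2) * hab

lemma prob_nonneg (a b s : ℝ) (t x : ℕ) : 0 ≤ prob a b s t x := by
  unfold prob; positivity

lemma sum_prob_step (a b s : ℝ) (hab : a ^ 2 + b ^ 2 = 1) (hs : s ^ 2 = 1) (t N : ℕ) :
    ∑ x ∈ Finset.range (N + 2), prob a b s (t + 1) x
      ≤ ∑ x ∈ Finset.range (N + 3), prob a b s t x := by
  have key : ∀ N : ℕ, ∑ x ∈ Finset.range (N + 2), prob a b s (t + 1) x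
      + ‖(psi a b s (t + 1) (N + 2)).2‖ ^ 2 + ‖(psi a b s t 0).2‖ ^ 2
      + ‖(psi a b s (t + 1) (N + 3)).2‖ ^ 2
      = ∑ x ∈ Finset.range (N + 3), prob a b s t x := by
    intro N
    induction N with
    | zero =>
      have h1 := coin_norm a b hab (psi a b s t 1).1 (psi a b s t 1).2
      have h2 := coin_norm a b hab (psi a b s t 2).1 (psi a b s t 2).2
      have h3 : ‖(s : ℂ) * (psi a b s t 0).1‖ ^ 2 = ‖(psi a b s t 0).1‖ ^ 2 := by
        rw [norm_mul, mul_pow, Complex.norm_real, Real.norm_eq_abs, sq_abs, hs, one_mul]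
      simp only [Finset.sum_range_succ, Finset.sum_range_zero, prob, zero_add, psi_succ_fst,
        psi_succ_snd_zero, psi_succ_snd_one, h3]
      rw [show (2 : ℕ) = 0 + 2 from rfl, show (3 : ℕ) = 1 + 2 from rfl, psi_succ_snd,
        psi_succ_snd]
      simp only [zero_add, Nat.reduceAdd, norm_zero]
      linarith
    | succ n ih =>
      rw [Finset.sum_range_succ, Finset.sum_range_succ _ (n + 3), ← ih]
      have h1 := coin_norm a b hab (psi a b s t (n + 3)).1 (psi a b s t (n + 3)).2
      rw [← psi_succ_fst, ← psi_succ_snd] at h1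
      simp only [prob]
      rw [show n + 1 + 2 = n + 3 from rfl, show n + 1 + 3 = n + 2 + 2 from rfl]
      linarith
  rw [← key]
  have := sq_nonneg ‖(psi a b s (t + 1) (N + 2)).2‖
  have := sq_nonneg ‖(psi a b s (t + 1) (N + 3)).2‖
  have := sq_nonneg ‖(psi a b s t 0).2‖
  linarith

lemma sum_prob_le (a b s : ℝ) (hab : a ^ 2 + b ^ 2 = 1) (hs : s ^ 2 = 1) (t : ℕ) :
    ∀ N : ℕ, ∑ x ∈ Finset.range (N + 2), prob a b s t x ≤ 1 := by
  induction t with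
  | zero =>
    intro N
    rw [Finset.sum_eq_single 0]
    · simp [prob, psi_zero]
    · intro x _ hx
      simp [prob, psi_zero, hx]
    · simp
  | succ t ih => exact fun N => (sum_prob_step a b s hab hs t N).trans (ih (N + 1))

lemma prob_le (a b s : ℝ) (hab : a ^ 2 + b ^ 2 = 1) (hs : s ^ 2 = 1) (t x : ℕ) :
    prob a b s t x ≤ 1 :=
  (Finset.single_le_sum (f := prob a b s t) (fun i _ => prob_nonneg a b s t i)
    (Finset.mem_range.2 (by omega : x < x + 2))).trans (sum_prob_le a b s hab hs t x)

lemma fst_le (a b s : ℝ) (hab : a ^ 2 + b ^ 2 = 1) (hs : s ^ 2 = 1) (t x : ℕ) :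
    ‖(psi a b s t x).1‖ ≤ 1 := by
  have h := prob_le a b s hab hs t x
  unfold prob at h
  nlinarith [norm_nonneg (psi a b s t x).1, sq_nonneg ‖(psi a b s t x).2‖]

lemma snd_le (a b s : ℝ) (hab : a ^ 2 + b ^ 2 = 1) (hs : s ^ 2 = 1) (t x : ℕ) :
    ‖(psi a b s t x).2‖ ≤ 1 := by
  have h := prob_le a b s hab hs t x
  unfold prob at h
  nlinarith [norm_nonneg (psi a b s t x).2, sq_nonneg ‖(psi a b s t x).1‖]

lemma gen_bound (z : ℝ) (hz0 : 0 < z) (hz1 : z < 1) (f : ℕ → ℂ) (hf : ∀ t, ‖f t‖ ≤ 1) :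
    Summable (fun t => f t * (z : ℂ) ^ t) ∧ ‖∑' t, f t * (z : ℂ) ^ t‖ ≤ (1 - z)⁻¹ := by
  have hb : ∀ t, ‖f t * (z : ℂ) ^ t‖ ≤ z ^ t := by
    intro t
    rw [norm_mul, norm_pow, Complex.norm_real, Real.norm_eq_abs, abs_of_pos hz0]
    exact mul_le_of_le_one_left (by positivity) (hf t)
  have hg := hasSum_geometric_of_lt_one hz0.le hz1
  exact ⟨Summable.of_norm_bounded hg.summable hb, tsum_of_norm_bounded hg hb⟩

/-- Abstract linear algebra part: bounded solutions of the stationary equations. -/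
lemma stationary (a b s z lam C : ℝ) (ha : a ≠ 0) (hb : b ≠ 0) (hz : z ≠ 0)
    (hab : a ^ 2 + b ^ 2 = 1) (hl0 : 0 < lam) (hl1 : lam < 1)
    (hlam : z * a * lam ^ 2 - (1 + z ^ 2) * lam + z * a = 0)
    (L R : ℕ → ℂ) (hL : ∀ x, ‖L x‖ ≤ C) (hR : ∀ x, ‖R x‖ ≤ C)
    (h1 : ∀ x, L (x + 1) = z * (a * L (x + 2) - b * R (x + 2)))
    (h2 : ∀ x, R (x + 2) = z * (b * L (x + 1) + a * R (x + 1)))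
    (h3 : R 1 = z * (s * L 0)) (x : ℕ) :
    L (x + 1) = s / b * lam ^ x * (lam - a * z) * L 0 := by
  have haC : (a : ℂ) ≠ 0 := by exact_mod_cast ha
  have hbC : (b : ℂ) ≠ 0 := by exact_mod_cast hb
  have hzC : (z : ℂ) ≠ 0 := by exact_mod_cast hz
  have habC : (a : ℂ) ^ 2 + b ^ 2 = 1 := by exact_mod_cast hab
  have hlamC : (z : ℂ) * a * lam ^ 2 - (1 + z ^ 2) * lam + z * a = 0 := by exact_mod_cast hlam
  let D : ℕ → ℂ := fun x => z * b * L (x + 1) - (lam - z * a) * R (x + 1)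
  have hD : ∀ x, D x = lam * D (x + 1) := by
    intro x
    apply mul_left_cancel₀ (mul_ne_zero hzC haC)
    simp only [D]
    have e1 := h1 x
    have e2 := h2 x
    rw [show x + 1 + 1 = x + 2 from rfl]
    linear_combination (z * b * lam : ℂ) * e1 + (lam - z * a : ℂ) * e2
      + R (x + 2) * hlamC - z ^ 2 * lam * R (x + 2) * habC
  have hDn : ∀ n x, D x = lam ^ n * D (x + n) := by
    intro n
    induction n with
    | zero => intro x; simp
    | succ n ih => intro x; rw [ih, hD (x + n)]; ring_nf
  have hDb : ∀ x, ‖D x‖ ≤ ‖(z * b : ℂ)‖ * C + ‖(lam - z * a : ℂ)‖ * C := by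
    intro x
    refine (norm_sub_le _ _).trans ?_
    rw [norm_mul, norm_mul (lam - z * a : ℂ)]
    gcongr
    · exact hL _
    · exact hR _
  have hD0 : ∀ x, D x = 0 := by
    intro x
    have hle : ∀ n : ℕ, ‖D x‖ ≤ lam ^ n * (‖(z * b : ℂ)‖ * C + ‖(lam - z * a : ℂ)‖ * C) := by
      intro n
      rw [hDn n x, norm_mul, norm_pow, Complex.norm_real, Real.norm_eq_abs, abs_of_pos hl0]
      exact mul_le_mul_of_nonneg_left (hDb _) (by positivity)
    have ht := (tendsto_pow_atTop_nhds_zero_of_lt_one hl0.le hl1).mul_const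
      (‖(z * b : ℂ)‖ * C + ‖(lam - z * a : ℂ)‖ * C)
    rw [zero_mul] at ht
    exact norm_le_zero_iff.1 (ge_of_tendsto' ht hle)
  have hRx : ∀ x, R (x + 1) = lam ^ x * (z * (s * L 0)) := by
    intro x
    induction x with
    | zero => simpa using h3
    | succ n ih =>
      have := hD0 n
      simp only [D] at this
      rw [h2 n, pow_succ]
      linear_combination this + lam * ih
  have := hD0 x
  simp only [D] at this
  rw [hRx] at this
  apply mul_left_cancel₀ (mul_ne_zero hzC hbC)
  have hc : (b : ℂ) * (s / b) = s := by field_simp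
  linear_combination this - z * lam ^ x * (lam - a * z) * L 0 * hc

/-- Generating function of the left-moving amplitude away from the wall:
for every sign `s ∈ {+1, −1}`, every `x ≥ 1` and every real `0 < z < 1`, the (absolutely
convergent) series `∑_t Ψ_t^L(x)·z^t` equals `m·λ(z)^{x−1}·(a·z − λ(z))·ν(z)/(z²−1)`. -/
theorem half_line_generating_function_left
    (κ : ℕ) (hκ : 3 ≤ κ) (s : ℝ) (hs : s = 1 ∨ s = -1) (a b : ℝ)
    (ha : a = 2 * Real.sqrt ((κ : ℝ) - 1) / κ) (hb : b = ((κ : ℝ) - 2) / κ)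
    (z : ℝ) (hz0 : 0 < z) (hz1 : z < 1) (x : ℕ) (hx : 1 ≤ x)
    (Δ lam m ν : ℝ)
    (hΔ : Δ = Real.sqrt (z ^ 4 + 2 * (1 - 2 * a ^ 2) * z ^ 2 + 1))
    (hlam : lam = (z ^ 2 + 1 - Δ) / (2 * a * z))
    (hm : m = s * κ / ((κ : ℝ) - 2))
    (hν : ν = (2 - m + m * z ^ 2 - m * Δ) / (2 * (1 - m))) :
    HasSum (fun t : ℕ => (psi a b s t x).1 * (z : ℂ) ^ t)
      (((m * lam ^ (x - 1) * (a * z - lam) * ν / (z ^ 2 - 1) : ℝ) : ℂ)) := by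
  have hκ3 : (3 : ℝ) ≤ κ := by exact_mod_cast hκ
  have hκ0 : (κ : ℝ) ≠ 0 := by linarith
  have hκ2 : (κ : ℝ) - 2 ≠ 0 := by linarith
  have hsq : Real.sqrt ((κ : ℝ) - 1) ^ 2 = κ - 1 := Real.sq_sqrt (by linarith)
  have hapos : 0 < a := by
    rw [ha]
    have : 0 < Real.sqrt ((κ : ℝ) - 1) := Real.sqrt_pos.2 (by linarith)
    positivity
  have hbpos : 0 < b := by
    rw [hb]
    exact div_pos (by linarith) (by linarith)
  have hab : a ^ 2 + b ^ 2 = 1 := by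
    rw [ha, hb, div_pow, div_pow, mul_pow, hsq]
    field_simp
    ring
  have hs2 : s ^ 2 = 1 := by rcases hs with h | h <;> rw [h] <;> norm_num
  have hmb : m * b = s := by
    rw [hm, hb]
    field_simp
  have hms : m = s / b := by rw [← hmb]; field_simp
  have hm2 : m ^ 2 * b ^ 2 = 1 := by rw [← mul_pow, hmb, hs2]
  have hb1 : b < 1 := by nlinarith
  have ha1 : a < 1 := by nlinarith
  have hm1 : 1 - m ≠ 0 := by
    intro h
    have : m = 1 := by linarith
    rw [this] at hm2
    nlinarith
  have hrad : z ^ 4 + 2 * (1 - 2 * a ^ 2) * z ^ 2 + 1 = (1 + z ^ 2) ^ 2 - (2 * a * z) ^ 2 := by ring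
  have haz : 0 < a * z := mul_pos hapos hz0
  have hazz : a * z < z := by nlinarith
  have hlt : 2 * a * z < 1 + z ^ 2 := by nlinarith [sq_nonneg (1 - z)]
  have hrad0 : 0 < z ^ 4 + 2 * (1 - 2 * a ^ 2) * z ^ 2 + 1 := by
    rw [hrad]
    exact sub_pos.2 (pow_lt_pow_left₀ hlt (by linarith) two_ne_zero)
  have hΔ0 : 0 < Δ := by rw [hΔ]; exact Real.sqrt_pos.2 hrad0
  have hΔ2 : Δ ^ 2 = z ^ 4 + 2 * (1 - 2 * a ^ 2) * z ^ 2 + 1 := by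
    rw [hΔ]; exact Real.sq_sqrt hrad0.le
  have hΔlt : Δ < 1 + z ^ 2 := by
    apply lt_of_pow_lt_pow_left₀ 2 (by positivity)
    rw [hΔ2, hrad]
    nlinarith [mul_pos haz haz]
  have hlm : 2 * (a * z * lam) = z ^ 2 + 1 - Δ := by
    rw [hlam]; field_simp
  have hl0 : 0 < lam := by
    rw [hlam]; exact div_pos (by linarith) (by linarith)
  have hl1 : lam < 1 := by
    rw [hlam, div_lt_one (by linarith)]
    have : 1 + z ^ 2 - 2 * a * z < Δ := by
      apply lt_of_pow_lt_pow_left₀ 2 hΔ0.le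
      rw [hΔ2, hrad]
      have := mul_pos haz (sub_pos.2 hlt)
      linarith
    linarith
  have hlamq : z * a * lam ^ 2 - (1 + z ^ 2) * lam + z * a = 0 := by
    have hne : 4 * (a * z) ≠ 0 := by positivity
    apply mul_left_cancel₀ hne
    linear_combination (2 * (a * z * lam) - (z ^ 2 + 1) - Δ) * hlm + hΔ2
  let L : ℕ → ℂ := fun x => ∑' t, (psi a b s t x).1 * (z : ℂ) ^ t
  let R : ℕ → ℂ := fun x => ∑' t, (psi a b s t x).2 * (z : ℂ) ^ t
  have gL := fun x => gen_bound z hz0 hz1 (fun t => (psi a b s t x).1)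
    (fun t => fst_le a b s hab hs2 t x)
  have gR := fun x => gen_bound z hz0 hz1 (fun t => (psi a b s t x).2)
    (fun t => snd_le a b s hab hs2 t x)
  have hLrec : ∀ x, L x = (psi a b s 0 x).1 + z * (a * L (x + 1) - b * R (x + 1)) := by
    intro x
    have e := (((gL (x + 1)).1.hasSum.mul_left (a : ℂ)).sub
      ((gR (x + 1)).1.hasSum.mul_left (b : ℂ))).mul_left (z : ℂ)
    simp only [L, R]
    rw [(gL x).1.tsum_eq_zero_add, ← e.tsum_eq]
    simp only [pow_zero, mul_one]
    congr 1
    refine tsum_congr fun t => ?_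
    rw [psi_succ_fst]
    ring
  have hRrec : ∀ x, R (x + 2) = z * (b * L (x + 1) + a * R (x + 1)) := by
    intro x
    have e := (((gL (x + 1)).1.hasSum.mul_left (b : ℂ)).add
      ((gR (x + 1)).1.hasSum.mul_left (a : ℂ))).mul_left (z : ℂ)
    simp only [L, R]
    rw [(gR (x + 2)).1.tsum_eq_zero_add, ← e.tsum_eq]
    simp only [psi_zero]
    simp only [pow_zero, mul_one, Nat.add_eq_zero_iff, OfNat.ofNat_ne_zero, and_false, if_false,
      zero_add]
    refine tsum_congr fun t => ?_
    rw [psi_succ_snd]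
    ring
  have hR1 : R 1 = z * (s * L 0) := by
    have e := (((gL 0).1.hasSum.mul_left (s : ℂ))).mul_left (z : ℂ)
    simp only [L, R]
    rw [(gR 1).1.tsum_eq_zero_add, ← e.tsum_eq]
    simp only [psi_zero]
    simp only [pow_zero, mul_one, one_ne_zero, if_false, zero_add]
    refine tsum_congr fun t => ?_
    rw [psi_succ_snd_one]
    ring
  have hst := stationary a b s z lam (1 - z)⁻¹ hapos.ne' hbpos.ne' hz0.ne' hab hl0 hl1 hlamq L R
    (fun x => (gL x).2) (fun x => (gR x).2)
    (fun x => by rw [hLrec (x + 1)]; simp [psi_zero]) hRrec hR1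
  have hmC : (s : ℂ) / b = m := by rw [hms]; push_cast; rfl
  simp only [hmC] at hst
  have hL0 : L 0 * (2 - m + m * z ^ 2 + m * Δ) = 2 := by
    have e0 := hLrec 0
    have e1 := hst 0
    rw [psi_zero] at e0
    simp only [if_true, zero_add, pow_zero, mul_one] at e0 e1
    rw [hR1, e1] at e0
    have hlmC : 2 * ((a : ℂ) * z * lam) = z ^ 2 + 1 - Δ := by exact_mod_cast hlm
    have habC : (a : ℂ) ^ 2 + b ^ 2 = 1 := by exact_mod_cast hab
    have hmbC : (m : ℂ) * b = s := by exact_mod_cast hmb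
    linear_combination 2 * e0 + L 0 * m * hlmC - 2 * z ^ 2 * m * L 0 * habC
      + 2 * z ^ 2 * b * L 0 * hmbC
  have hPP : (2 - m + m * z ^ 2 + m * Δ) * (2 - m + m * z ^ 2 - m * Δ)
      = 4 * (1 - m) * (1 - z ^ 2) := by
    linear_combination (-m ^ 2) * hΔ2 + 4 * m ^ 2 * z ^ 2 * hab - 4 * z ^ 2 * hm2
  have hz2 : 1 - z ^ 2 ≠ 0 := by nlinarith
  have hL0' : L 0 = ((ν / (1 - z ^ 2) : ℝ) : ℂ) := by
    have hPPC : (2 - m + m * z ^ 2 + m * Δ : ℂ) * (2 - m + m * z ^ 2 - m * Δ)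
      = 4 * (1 - m) * (1 - z ^ 2) := by exact_mod_cast hPP
    have h1 : (1 - m : ℂ) ≠ 0 := by exact_mod_cast hm1
    have h2 : (1 - z ^ 2 : ℂ) ≠ 0 := by exact_mod_cast hz2
    rw [hν]
    push_cast
    rw [div_div, eq_div_iff (by simp [h1, h2])]
    linear_combination (-L 0 / 2) * hPPC + (2 - m + m * z ^ 2 - m * Δ : ℂ) / 2 * hL0
  obtain ⟨y, rfl⟩ : ∃ y, x = y + 1 := ⟨x - 1, by omega⟩
  have hfin : ((m * lam ^ (y + 1 - 1) * (a * z - lam) * ν / (z ^ 2 - 1) : ℝ) : ℂ) = L (y + 1) := by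
    rw [hst y, hL0', Nat.add_sub_cancel]
    have : m * lam ^ y * (a * z - lam) * ν / (z ^ 2 - 1)
        = m * lam ^ y * (lam - a * z) * (ν / (1 - z ^ 2)) := by
      rw [show z ^ 2 - 1 = -(1 - z ^ 2) by ring, div_neg]
      ring
    rw [this]
    push_cast
    ring
  rw [hfin]
  exact (gL (y + 1)).1.hasSum

end
end

section
/- In Case (A) (s = +1) the amplitudes vanish pointwise: for every x ∈ ℤ₊, lim_{t→∞} Ψ_t^L(x) = 0 and lim_{t→∞} Ψ_t^R(x) = 0. -/
open Filter Topology

noncomputable section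

open PowerSeries in
/-- The power series has absolutely summable coefficients with sum `v`. -/
def EvOne (P : PowerSeries ℂ) (v : ℂ) : Prop :=
  Summable (fun n => ‖coeff n P‖) ∧ ∑' n, coeff n P = v

namespace QW

open PowerSeries

lemma ev_mul {P Q : PowerSeries ℂ} {u v : ℂ} (hP : EvOne P u) (hQ : EvOne Q v) :
    EvOne (P * Q) (u * v) := by
  have hc : (fun n => coeff n (P * Q)) =
      fun n => ∑ kl ∈ Finset.HasAntidiagonal.antidiagonal n, coeff kl.1 P * coeff kl.2 Q :=
    funext fun n => coeff_mul n P Q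
  have h1 := summable_norm_sum_mul_antidiagonal_of_summable_norm
    (f := fun n => coeff n P) (g := fun n => coeff n Q) hP.1 hQ.1
  have h2 := tsum_mul_tsum_eq_tsum_sum_antidiagonal_of_summable_norm
    (f := fun n => coeff n P) (g := fun n => coeff n Q) hP.1 hQ.1
  constructor
  · refine h1.congr (fun n => ?_)
    rw [coeff_mul]
  · rw [hc, ← hP.2, ← hQ.2]
    exact h2.symm

lemma ev_sub {P Q : PowerSeries ℂ} {u v : ℂ} (hP : EvOne P u) (hQ : EvOne Q v) :
    EvOne (P - Q) (u - v) := by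
  constructor
  · refine Summable.of_nonneg_of_le (fun _ => norm_nonneg _) (fun n => ?_) (hP.1.add hQ.1)
    have h := norm_sub_le (coeff n P) (coeff n Q)
    rwa [← LinearMap.map_sub] at h
  · rw [← hP.2, ← hQ.2, ← Summable.tsum_sub hP.1.of_norm hQ.1.of_norm]
    simp only [map_sub]

lemma ev_C (c : ℂ) : EvOne (C c) c := by
  constructor
  · apply summable_of_ne_finset_zero (s := {0})
    intro n hn
    simp at hn
    simp [coeff_C, hn]
  · rw [tsum_eq_single 0]
    · simp
    · intro n hn
      simp [coeff_C, hn]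

lemma ev_X : EvOne X 1 := by
  constructor
  · apply summable_of_ne_finset_zero (s := {1})
    intro n hn
    simp at hn
    simp [coeff_X, hn]
  · rw [tsum_eq_single 1]
    · simp
    · intro n hn
      simp [coeff_X, hn]

lemma ev_unique {P : PowerSeries ℂ} {u v : ℂ} (hP : EvOne P u) (hQ : EvOne P v) : u = v :=
  hP.2.symm.trans hQ.2

lemma tendsto_of_one_sub {H R : PowerSeries ℂ} (h : (1 - X) * H = R) (hR : EvOne R 0) :
    Tendsto (fun n => coeff n H) atTop (𝓝 0) := by
  have key : ∀ n, coeff n H = ∑ k ∈ Finset.range (n + 1), coeff k R := by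
    intro n
    induction n with
    | zero => rw [← h]; simp [sub_mul]
    | succ n ih =>
      rw [Finset.sum_range_succ, ← ih, ← h, sub_mul, map_sub, coeff_succ_X_mul]
      simp
  have h1 := (hR.1.of_norm.hasSum.tendsto_sum_nat)
  rw [hR.2] at h1
  exact ((tendsto_add_atTop_iff_nat 1).2 h1).congr (fun n => (key n).symm)

lemma summable_catalan : Summable (fun n : ℕ => (catalan n : ℝ) / 4 ^ n) := by
  have hp : ∀ n : ℕ, (catalan n : ℝ) / 4 ^ n =
      2 * ((Nat.centralBinom n : ℝ) / 4 ^ n - (Nat.centralBinom (n + 1) : ℝ) / 4 ^ (n + 1)) := by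
    intro n
    have h1 : ((n : ℝ) + 1) * catalan n = Nat.centralBinom n := by
      exact_mod_cast succ_mul_catalan_eq_centralBinom n
    have h2 : ((n : ℝ) + 1) * Nat.centralBinom (n + 1) = 2 * (2 * n + 1) * Nat.centralBinom n := by
      exact_mod_cast Nat.succ_mul_centralBinom_succ n
    have hn : (n : ℝ) + 1 ≠ 0 := by positivity
    rw [← h1] at h2 ⊢
    have h3 : (Nat.centralBinom (n + 1) : ℝ) = 2 * (2 * n + 1) * catalan n := by
      apply mul_left_cancel₀ hn
      rw [h2]; ring
    rw [h3, pow_succ]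
    field_simp
    ring
  refine summable_of_sum_range_le (c := 2) (fun n => by positivity) (fun n => ?_)
  simp_rw [hp]
  rw [← Finset.mul_sum, Finset.sum_range_sub']
  have : (0 : ℝ) ≤ (Nat.centralBinom n : ℝ) / 4 ^ n := by positivity
  simp
  linarith

/-- Complex Catalan series. -/
def cat : PowerSeries ℂ := PowerSeries.map (Nat.castRingHom ℂ) catalanSeries

lemma cat_eq : cat ^ 2 * X + 1 = cat := by
  have := congrArg (PowerSeries.map (Nat.castRingHom ℂ)) catalanSeries_sq_mul_X_add_one
  simpa [cat] using this

/-- The series of `√(1 - η z)`. -/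
def srt (η : ℂ) : PowerSeries ℂ := 1 - C (η / 2) * (X * rescale (η / 4) cat)

lemma srt_sq (η : ℂ) : srt η ^ 2 = 1 - C η * X := by
  have h := congrArg (rescale (η / 4)) cat_eq
  simp only [map_add, map_mul, map_pow, map_one, rescale_X] at h
  have h2 : C (η / 2) = 2 * (C (η / 4) : PowerSeries ℂ) := by
    rw [show (2 : PowerSeries ℂ) = C 2 from (map_ofNat C 2).symm, ← map_mul]; congr 1; ring
  have h4 : C η = 4 * (C (η / 4) : PowerSeries ℂ) := by
    rw [show (4 : PowerSeries ℂ) = C 4 from (map_ofNat C 4).symm, ← map_mul]; congr 1; ring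
  unfold srt
  rw [h2, h4]
  linear_combination 4 * C (η / 4) * X * h

lemma srt_const (η : ℂ) : constantCoeff (srt η) = 1 := by
  simp [srt]

lemma coeff_resc (η : ℂ) (n : ℕ) :
    coeff n (rescale (η / 4) cat) = η ^ n * ((catalan n / 4 ^ n : ℝ) : ℂ) := by
  simp [cat, coeff_rescale, div_pow]
  ring

/-- The value at `1`. -/
def sval (η : ℂ) : ℂ :=
  1 - (η / 2) * (1 * ∑' n, coeff n (rescale (η / 4) cat))

lemma ev_srt (η : ℂ) (hη : ‖η‖ = 1) : EvOne (srt η) (sval η) := by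
  have h1 : EvOne (1 : PowerSeries ℂ) 1 := by simpa using ev_C 1
  refine ev_sub h1 (ev_mul (ev_C _) (ev_mul ev_X ⟨?_, rfl⟩))
  refine summable_catalan.congr (fun n => ?_)
  rw [coeff_resc, norm_mul, norm_pow, hη, one_pow, one_mul, Complex.norm_real, Real.norm_of_nonneg]
  positivity

lemma sval_conj (η : ℂ) : sval (starRingEnd ℂ η) = starRingEnd ℂ (sval η) := by
  simp only [sval, map_sub, map_mul, map_one, map_div₀, Complex.conj_tsum, coeff_resc, map_pow,
    Complex.conj_ofReal, map_ofNat]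

/-- The discriminant root. -/
def DD (h : ℂ) : PowerSeries ℂ :=
  (srt h * srt (starRingEnd ℂ h)) * (srt (-h) * srt (-(starRingEnd ℂ h)))

lemma ev_DD (a b : ℝ) (hb : 0 < b) (hab : a ^ 2 + b ^ 2 = 1) :
    EvOne (DD (a + b * Complex.I)) (2 * b) := by
  set h : ℂ := a + b * Complex.I with hh
  have hc : starRingEnd ℂ h = a - b * Complex.I := by
    simp [hh]; ring
  have hn : ‖h‖ = 1 := by
    rw [hh, Complex.norm_add_mul_I, hab, Real.sqrt_one]
  have e1 := ev_srt h hn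
  have e2 := ev_srt (starRingEnd ℂ h) (by simpa using hn)
  have e3 := ev_srt (-h) (by simpa using hn)
  have e4 := ev_srt (-(starRingEnd ℂ h)) (by simpa using hn)
  have e := ev_mul (ev_mul e1 e2) (ev_mul e3 e4)
  have hr : (sval h * sval (starRingEnd ℂ h)) * (sval (-h) * sval (-(starRingEnd ℂ h))) =
      ((‖sval h‖ ^ 2 * ‖sval (-h)‖ ^ 2 : ℝ) : ℂ) := by
    rw [← map_neg, sval_conj, sval_conj, Complex.mul_conj, Complex.mul_conj,
      Complex.normSq_eq_norm_sq, Complex.normSq_eq_norm_sq]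
    push_cast; ring
  have sq : ∀ η : ℂ, ‖η‖ = 1 → sval η ^ 2 = 1 - η := by
    intro η hη
    have h1 := ev_mul (ev_srt η hη) (ev_srt η hη)
    rw [← sq, srt_sq] at h1
    have h2 : EvOne (1 : PowerSeries ℂ) 1 := by simpa using ev_C 1
    have h3 := ev_sub h2 (ev_mul (ev_C η) ev_X)
    have := ev_unique h1 h3
    linear_combination this
  have s1 := sq h hn
  have s2 := sq (starRingEnd ℂ h) (by simpa using hn)
  have s3 := sq (-h) (by simpa using hn)
  have s4 := sq (-(starRingEnd ℂ h)) (by simpa using hn)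
  have hab' : (a : ℂ) ^ 2 + (b : ℂ) ^ 2 = 1 := by exact_mod_cast hab
  have hsq : ((sval h * sval (starRingEnd ℂ h)) * (sval (-h) * sval (-(starRingEnd ℂ h)))) ^ 2
      = (2 * (b : ℂ)) ^ 2 := by
    rw [mul_pow, mul_pow, mul_pow, s1, s2, s3, s4, hc, hh]
    have hI : Complex.I ^ 2 = -1 := Complex.I_sq
    have : (1 - ((a : ℂ) + b * Complex.I)) * (1 - (a - b * Complex.I)) *
        ((1 - -(a + b * Complex.I)) * (1 - -(a - b * Complex.I))) =
        1 - 2 * (a ^ 2 + b ^ 2 * Complex.I ^ 2) + (a ^ 2 - b ^ 2 * Complex.I ^ 2) ^ 2 := by ring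
    rw [this, hI]
    have h5 : (a : ℂ) ^ 2 = 1 - b ^ 2 := by linear_combination hab'
    rw [h5]; ring
  have hval : (sval h * sval (starRingEnd ℂ h)) * (sval (-h) * sval (-(starRingEnd ℂ h)))
      = 2 * (b : ℂ) := by
    rw [hr] at hsq ⊢
    have h6 : (‖sval h‖ ^ 2 * ‖sval (-h)‖ ^ 2) ^ 2 = (2 * b) ^ 2 := by exact_mod_cast hsq
    have h7 := (pow_left_inj₀ (by positivity) (by positivity) two_ne_zero).1 h6
    exact_mod_cast congrArg (fun r : ℝ => (r : ℂ)) h7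
  rw [hval] at e
  exact e

lemma DD_sq (a b : ℝ) (hab : a ^ 2 + b ^ 2 = 1) :
    DD (a + b * Complex.I) ^ 2 = (1 - X ^ 2) ^ 2 + 4 * C (b : ℂ) ^ 2 * X ^ 2 := by
  have hc : starRingEnd ℂ ((a : ℂ) + b * Complex.I) = a - b * Complex.I := by
    simp; ring
  have hI : (C Complex.I : PowerSeries ℂ) ^ 2 = -1 := by
    rw [← map_pow, Complex.I_sq]; simp
  have hab' : (C (a : ℂ) : PowerSeries ℂ) ^ 2 = 1 - C (b : ℂ) ^ 2 := by
    have : (a : ℂ) ^ 2 = 1 - (b : ℂ) ^ 2 := by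
      have : (a : ℂ) ^ 2 + (b : ℂ) ^ 2 = 1 := by exact_mod_cast hab
      linear_combination this
    rw [← map_pow, this]; simp
  unfold DD
  rw [hc, mul_pow, mul_pow, mul_pow, srt_sq, srt_sq, srt_sq, srt_sq]
  simp only [map_add, map_sub, map_mul, map_neg]
  generalize (C (a : ℂ) : PowerSeries ℂ) = A at *
  generalize (C (b : ℂ) : PowerSeries ℂ) = B at *
  generalize (C Complex.I : PowerSeries ℂ) = J at *
  have : (1 - (A + B * J) * X) * (1 - (A - B * J) * X) *
        ((1 - -(A + B * J) * X) * (1 - -(A - B * J) * X)) =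
        1 - 2 * (A ^ 2 + B ^ 2 * J ^ 2) * X ^ 2 + (A ^ 2 - B ^ 2 * J ^ 2) ^ 2 * X ^ 4 := by ring
  rw [this, hI, hab']
  ring

lemma DD_const (h : ℂ) : constantCoeff (DD h) = 1 := by
  simp [DD, srt_const]

lemma rescale_srt (η : ℂ) : rescale (-1) (srt η) = srt (-η) := by
  have : rescale (-1) (rescale (η / 4) cat) = rescale (-η / 4) cat := by
    rw [rescale_rescale]; congr 2; ring
  have hC : ∀ c : ℂ, rescale (-1 : ℂ) (C c) = C c := by
    intro c; ext n; simp only [coeff_rescale, coeff_C]; split_ifs with h <;> simp [h]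
  simp only [srt, map_sub, map_mul, map_one, rescale_neg_one_X, this, hC, neg_div, map_neg]
  ring

lemma rescale_DD (h : ℂ) : rescale (-1) (DD h) = DD h := by
  simp only [DD, map_mul, rescale_srt, neg_neg]
  ring

/-- Main analytic statement. -/
lemma coeff_tendsto (a b : ℝ) (hb : 0 < b) (hb1 : b < 1) (hab : a ^ 2 + b ^ 2 = 1)
    (G : PowerSeries ℂ)
    (hG : 2 * (1 - C (b : ℂ)) * (1 - X ^ 2) * G =
      DD (a + b * Complex.I) - (2 * C (b : ℂ) - 1 + X ^ 2)) :
    Tendsto (fun n => coeff n G) atTop (𝓝 0) := by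
  set D := DD (a + b * Complex.I) with hD
  have hC : ∀ c : ℂ, rescale (-1 : ℂ) (C c) = C c := by
    intro c; ext n; simp only [coeff_rescale, coeff_C]; split_ifs with h <;> simp [h]
  set R := D - (2 * C (b : ℂ) - 1 + X ^ 2) with hR
  have eR : EvOne R 0 := by
    have := ev_sub (ev_sub (ev_DD a b hb hab) (ev_C (2 * b - 1))) (ev_mul ev_X ev_X)
    have h0 : 2 * (b : ℂ) - (2 * b - 1) - 1 * 1 = 0 := by ring
    rw [h0] at this
    convert this using 1
    simp only [hR, hD, map_sub, map_mul, map_one, map_ofNat]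
    ring
  have rR : rescale (-1) R = R := by
    simp only [hR, map_sub, map_add, map_mul, map_pow, map_one, map_ofNat, rescale_neg_one_X, hC,
      hD, rescale_DD]
    ring
  set K : PowerSeries ℂ := 2 * (1 - C (b : ℂ)) with hK
  have t1 : Tendsto (fun n => coeff n (K * (1 + X) * G)) atTop (𝓝 0) := by
    apply tendsto_of_one_sub (R := R) _ eR
    rw [← hG]; ring
  have t2' : Tendsto (fun n => coeff n (rescale (-1) (K * (1 - X) * G))) atTop (𝓝 0) := by
    apply tendsto_of_one_sub (R := R) _ eR
    have h2 : (1 - X : PowerSeries ℂ) = rescale (-1) (1 + X) := by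
      simp [sub_eq_add_neg]
    rw [h2, ← map_mul, ← rR, ← hG, ← h2]
    congr 1; ring
  have t2 : Tendsto (fun n => coeff n (K * (1 - X) * G)) atTop (𝓝 0) := by
    rw [tendsto_zero_iff_norm_tendsto_zero] at t2' ⊢
    refine t2'.congr (fun n => ?_)
    rw [coeff_rescale, norm_mul, norm_pow]; simp
  have t3 := (t1.add t2).const_mul ((4 * (1 - (b : ℂ)))⁻¹)
  have hne : (4 * (1 - (b : ℂ))) ≠ 0 := by
    have : (1 - (b : ℂ)) ≠ 0 := by
      intro h
      have : (1 : ℝ) - b = 0 := by exact_mod_cast h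
      linarith
    simpa using this
  simp only [add_zero, mul_zero] at t3
  refine t3.congr (fun n => ?_)
  rw [← map_add]
  have : K * (1 + X) * G + K * (1 - X) * G = C (4 * (1 - (b : ℂ))) * G := by
    simp only [hK, map_sub, map_mul, map_one, map_ofNat]; ring
  rw [this, coeff_C_mul, inv_mul_cancel_left₀ hne]

lemma ofNat_ne (c : ℂ) (hc : c ≠ 0) : (C c : PowerSeries ℂ) ≠ 0 := by
  intro h
  exact hc (by simpa using congrArg constantCoeff h)

lemma psi_origin (a b : ℝ) (hb : 0 < b) (hab : a ^ 2 + b ^ 2 = 1) :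
    ∃ G : PowerSeries ℂ, (∀ t, (psi a b 1 t 0).1 = coeff t G) ∧
      2 * (1 - C (b : ℂ)) * (1 - X ^ 2) * G =
      DD (a + b * Complex.I) - (2 * C (b : ℂ) - 1 + X ^ 2) := by
  have hDsq := DD_sq a b hab
  have hDc := DD_const (a + b * Complex.I)
  set D := DD (a + b * Complex.I) with hD
  have hbC : (b : ℂ) ≠ 0 := by exact_mod_cast hb.ne'
  have hBne : (C (b : ℂ) : PowerSeries ℂ) ≠ 0 := by
    intro h
    exact hbC (by simpa using congrArg constantCoeff h)
  have hAB : (C (a : ℂ) : PowerSeries ℂ) ^ 2 + C (b : ℂ) ^ 2 = 1 := by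
    have : (a : ℂ) ^ 2 + (b : ℂ) ^ 2 = 1 := by exact_mod_cast hab
    rw [← map_pow, ← map_pow, ← map_add, this, map_one]
  obtain ⟨F, hF⟩ : ∃ F : PowerSeries ℂ, 2 * C (b : ℂ) * (X * F) = 1 - X ^ 2 - D := by
    have : (X : PowerSeries ℂ) ∣ 1 - X ^ 2 - D := by
      rw [X_dvd_iff]; simp [hDc]
    obtain ⟨E, hE⟩ := this
    refine ⟨C ((2 * (b : ℂ))⁻¹) * E, ?_⟩
    rw [hE]
    have : 2 * C (b : ℂ) * C ((2 * (b : ℂ))⁻¹) = (1 : PowerSeries ℂ) := by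
      rw [show (2 : PowerSeries ℂ) = C 2 from (map_ofNat C 2).symm, ← map_mul, ← map_mul,
        mul_inv_cancel₀ (by simpa using hbC), map_one]
    linear_combination X * E * this
  have hI1 : (1 - C (b : ℂ) * X * F) * (1 - C (b : ℂ) * X * F)⁻¹ = 1 :=
    PowerSeries.mul_inv_cancel _ (by simp)
  have hI2 : (1 - X * F) * (1 - X * F)⁻¹ = 1 :=
    PowerSeries.mul_inv_cancel _ (by simp)
  have hu1 : (1 - C (b : ℂ) * X * F) ≠ 0 := left_ne_zero_of_mul_eq_one hI1
  set m := C (a : ℂ) * X * (1 - C (b : ℂ) * X * F)⁻¹ with hm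
  set G := (1 - X * F)⁻¹ with hGdef
  have hG0 : constantCoeff G = 1 := by simp [hGdef]
  have hm1 : m = C (a : ℂ) * X + C (b : ℂ) * X * F * m := by
    linear_combination C (a : ℂ) * X * hI1 + (1 - C (b : ℂ) * X * F) * hm
  have hquad : C (b : ℂ) * X * F ^ 2 - (1 - X ^ 2) * F - C (b : ℂ) * X = 0 := by
    have h4 : (4 * C (b : ℂ) * X : PowerSeries ℂ) ≠ 0 :=
      mul_ne_zero (mul_ne_zero (by rw [← map_ofNat C 4]; exact ofNat_ne _ (by norm_num)) hBne) X_ne_zero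
    apply mul_left_cancel₀ h4
    have : D = 1 - X ^ 2 - 2 * C (b : ℂ) * (X * F) := by linear_combination hF
    rw [this] at hDsq
    linear_combination hDsq
  have hF1 : F = C (a : ℂ) * X * F * m - C (b : ℂ) * X := by
    apply mul_left_cancel₀ hu1
    linear_combination -hquad - C (a : ℂ) * X * F * hm1 - X ^ 2 * F * hAB
  have hmain : ∀ t x, psi a b 1 t x =
      (coeff t (if x = 0 then G else F * (m ^ x * (X * G))),
       coeff t (if x = 0 then 0 else m ^ (x - 1) * (X * G))) := by
    intro t
    induction t with
    | zero =>
      intro x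
      by_cases hx : x = 0
      · simp [psi, hx, hG0]
      · simp [psi, hx]
    | succ t ih =>
      intro x
      have e1 : (if x = 0 then G else F * (m ^ x * (X * G))) = (if x = 0 then 1 else 0) +
          X * (C (a : ℂ) * (F * (m ^ (x + 1) * (X * G))) - C (b : ℂ) * (m ^ x * (X * G))) := by
        split_ifs with hx
        · subst hx
          linear_combination hI2 + X * G * hF1
        · linear_combination m ^ x * (X * G) * hF1
      rw [e1, psi]
      refine Prod.ext ?_ ?_
      · simp only [ih, map_add, coeff_succ_X_mul, map_sub, coeff_C_mul]
        by_cases hx : x = 0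
        · simp [hx, coeff_one]
        · simp [hx]
      · rcases x with _ | _ | x
        · simp
        · simp [ih, coeff_succ_X_mul]
        · have e2 : m ^ (x + 1) * (X * G) = X * (C (b : ℂ) * (F * (m ^ (x + 1) * (X * G)))
              + C (a : ℂ) * (m ^ x * (X * G))) := by
            linear_combination m ^ x * (X * G) * hm1
          have e3 := congrArg (coeff (t + 1)) e2
          simp only [coeff_succ_X_mul, map_add, coeff_C_mul] at e3
          simp only [ih]
          simpa using e3.symm
  refine ⟨G, fun t => by rw [hmain]; simp, ?_⟩
  have h2 : (2 * C (b : ℂ) : PowerSeries ℂ) ≠ 0 :=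
    mul_ne_zero (by rw [← map_ofNat C 2]; exact ofNat_ne _ (by norm_num)) hBne
  apply mul_left_cancel₀ h2
  have hGD : G * (2 * C (b : ℂ) - 1 + X ^ 2 + D) = 2 * C (b : ℂ) := by
    linear_combination 2 * C (b : ℂ) * hI2 + G * hF
  linear_combination (D - (2 * C (b : ℂ) - 1 + X ^ 2)) * hGD - G * hDsq

end QW

/-- In Case (A) (`s = +1`) the amplitudes vanish pointwise: for every
`x ∈ ℤ₊`, `lim_{t→∞} Ψ_t^L(x) = 0` and `lim_{t→∞} Ψ_t^R(x) = 0`. -/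
theorem half_line_caseA_amplitudes_vanish
    (κ : ℕ) (hκ : 3 ≤ κ) (a b : ℝ)
    (ha : a = 2 * Real.sqrt ((κ : ℝ) - 1) / κ) (hb : b = ((κ : ℝ) - 2) / κ)
    (x : ℕ) :
    Tendsto (fun t : ℕ => (psi a b 1 t x).1) atTop (𝓝 0) ∧
    Tendsto (fun t : ℕ => (psi a b 1 t x).2) atTop (𝓝 0) := by
  have hκ' : (3 : ℝ) ≤ κ := by exact_mod_cast hκ
  have hκ0 : (κ : ℝ) ≠ 0 := by positivity
  have hb0 : 0 < b := by
    rw [hb]; apply div_pos <;> linarith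
  have hb1 : b < 1 := by
    rw [hb, div_lt_one (by linarith)]; linarith
  have ha0 : 0 < a := by
    rw [ha]
    have : 0 < Real.sqrt ((κ : ℝ) - 1) := Real.sqrt_pos.2 (by linarith)
    positivity
  have hab : a ^ 2 + b ^ 2 = 1 := by
    rw [ha, hb, div_pow, div_pow, mul_pow, Real.sq_sqrt (by linarith)]
    field_simp
    ring
  have haC : (a : ℂ) ≠ 0 := by exact_mod_cast ha0.ne'
  obtain ⟨G, hG, hG2⟩ := QW.psi_origin a b hb0 hab
  have h0 : Tendsto (fun t : ℕ => (psi a b 1 t 0).1) atTop (𝓝 0) :=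
    (QW.coeff_tendsto a b hb0 hb1 hab G hG2).congr (fun t => (hG t).symm)
  have step : ∀ y, Tendsto (fun t : ℕ => (psi a b 1 t y).1) atTop (𝓝 0) →
      Tendsto (fun t : ℕ => (psi a b 1 t (y + 1)).2) atTop (𝓝 0) →
      Tendsto (fun t : ℕ => (psi a b 1 t (y + 1)).1) atTop (𝓝 0) := by
    intro y h1 h2
    have h3 := (((tendsto_add_atTop_iff_nat 1).2 h1).add (h2.const_mul (b : ℂ))).const_mul
      ((a : ℂ)⁻¹)
    simp only [mul_zero, add_zero] at h3
    refine h3.congr (fun t => ?_)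
    rw [psi]
    field_simp
    ring
  induction x with
  | zero =>
    refine ⟨h0, ?_⟩
    rw [← tendsto_add_atTop_iff_nat 1]
    simp [psi]
  | succ y ih =>
    have h2 : Tendsto (fun t : ℕ => (psi a b 1 t (y + 1)).2) atTop (𝓝 0) := by
      rw [← tendsto_add_atTop_iff_nat 1]
      rcases y with _ | y
      · simpa [psi] using h0
      · have := (ih.1.const_mul (b : ℂ)).add (ih.2.const_mul (a : ℂ))
        simp only [mul_zero, add_zero] at this
        refine this.congr (fun t => ?_)
        conv_rhs => rw [psi]
        simp
    exact ⟨step y ih.1 h2, h2⟩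


end
end
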